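/- Let p(t) = (t−λ₁)^{k₁}⋯(t−λₙ)^{kₙ} be a complex polynomial with distinct roots λ₁,…,λₙ and all multiplicities kᵢ ≥ 2. Then the relation 'p(x) = 0, ‖x‖ ≤ 1' is stable in the following sense (equivalent to semiprojectivity of its universal C*-algebra): for every C*-algebra A, every increasing sequence I₁ ⊆ I₂ ⊆ ⋯ of closed two-sided ideals of A with I = closure(⋃ₙ Iₙ), and every x ∈ A/I with p(x) = 0 and ‖x‖ ≤ 1, there exist N ∈ ℕ and y ∈ A/I_N with p(y) = 0, ‖y‖ ≤ 1, such that the canonical surjection A/I_N → A/I maps y to x. -/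

import Mathlib

/-!
Write `q : A → A/I` for the quotient map and `x = q X`.

*Block form.* The kernels of the partial products `∏_{j ≤ i} (x - lam j) ^ k j` form an
`x`-invariant flag, and the differences `P i` of the projections onto them are orthogonal
projections with sum one, with respect to which `x` is block upper triangular with `i`-th diagonal
block `lam i` plus an element of nilpotency order `k i`. Conversely the polynomial annihilates every
element of this shape.

*Projections.* The `P i` are functions of a self-adjoint element with finite spectrum. The spectral
gaps persist modulo `I N`, for large `N`, in a self-adjoint lift of it to `A`, so the `P i` lift to
orthogonal projections with sum one in some `A/I N`. It remains to lift a contraction along one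
surjection `π : A/I N → A/I`, keeping it block triangular of the given type.

*Peripheral eigenvalues.* As `x` is a contraction, all its eigenvalues lie in the closed unit disc,
and the block of a unimodular eigenvalue is scalar and splits off as an orthogonal summand. So one
may assume `‖lam i‖ ≤ d < 1` for all `i`, and then the diagonal element `D = ∑ lam i P i` has norm
at most `d`.

*Triangular contractions.* Elements with small `k`-th power are uniformly close to elements with
zero `k`-th power, and this can be realised by a linear map all of whose values are nilpotent and
which asymptotically commutes with left multiplication by quasi-central approximate units. Starting
from a lift of `x` that is approximately triangular of the right type, such a map makes the shape
exact at the cost of a small change. This may push the norm slightly above `1`; since `‖D‖ < 1`,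
moving the element slightly towards `D` over the ideal `ker π`, by means of a quasi-central
approximate unit, restores the norm bound while hardly changing the image under `π`. Hence a
triangular contraction whose image is close to `x` is close to triangular contractions whose image
is arbitrarily close to `x`, and iteration yields an exact lift. Because the closeness required is
uniform, the exact lift `D` of the image of `D` can be transported in finitely many such steps along
the segment from that image to `x`.
-/

namespace PolynomialRelation

open Filter Topology Asymptotics

attribute [local instance] CStarAlgebra.spectralOrder CStarAlgebra.spectralOrderedRing

section Ideal

variable {A : Type*} [CStarAlgebra A]

lemma norm_one_sub_mul_sq {v : A} (hv : IsSelfAdjoint v) (a : A) :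
    ‖(1 - v) * a‖ ^ 2 = ‖(1 - v) * (a * star a) * (1 - v)‖ := by
  have hstar : star (1 - v) = 1 - v := ((IsSelfAdjoint.one A).sub hv).star_eq
  rw [sq, ← CStarRing.norm_self_mul_star, star_mul, hstar]
  simp only [mul_assoc]

lemma norm_le_one_of_mem_Icc {v : A} (hv : v ∈ Set.Icc 0 1) : ‖v‖ ≤ 1 :=
  (CStarAlgebra.norm_le_one_iff_of_nonneg v hv.1).2 hv.2

lemma norm_one_le_one : ‖(1 : A)‖ ≤ 1 :=
  norm_le_one_of_mem_Icc ⟨zero_le_one, le_rfl⟩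

lemma norm_one_sub_le_one {v : A} (hv : v ∈ Set.Icc 0 1) : ‖1 - v‖ ≤ 1 :=
  norm_le_one_of_mem_Icc ⟨sub_nonneg.2 hv.2, sub_le_self 1 hv.1⟩

variable (K : Ideal A) [K.IsTwoSided]

/-- The self-adjoint part `K ∩ K⋆` of a two-sided ideal, a non-unital C⋆-algebra in which to look
for an approximate unit of `K`. -/
def selfAdjointPart : NonUnitalStarSubalgebra ℂ A where
  carrier := {a | a ∈ K ∧ star a ∈ K}
  add_mem' ha hb := ⟨add_mem ha.1 hb.1, star_add (R := A) _ _ ▸ add_mem ha.2 hb.2⟩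
  zero_mem' := ⟨zero_mem K, (star_zero A).symm ▸ zero_mem K⟩
  mul_mem' ha hb := ⟨K.mul_mem_left _ hb.1, star_mul (R := A) _ _ ▸ K.mul_mem_left _ ha.2⟩
  smul_mem' c _ ha := ⟨Submodule.smul_of_tower_mem K c ha.1,
    star_smul c (_ : A) ▸ Submodule.smul_of_tower_mem K (star c) ha.2⟩
  star_mem' ha := ⟨ha.2, (star_star (_ : A)).symm ▸ ha.1⟩

variable [hK : IsClosed (K : Set A)]

theorem exists_approximateUnit :
    ∃ l : Filter A, l.NeBot ∧ (∀ᶠ v in l, v ∈ K ∧ v ∈ Set.Icc 0 1) ∧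
      ∀ j ∈ K, Tendsto (fun v => (1 - v) * j) l (𝓝 0) := by
  have : IsClosed (selfAdjointPart K : Set A) := hK.inter (hK.preimage continuous_star)
  let _ := CStarAlgebra.spectralOrder (selfAdjointPart K)
  have := CStarAlgebra.spectralOrderedRing (selfAdjointPart K)
  have hl := CStarAlgebra.increasingApproximateUnit (selfAdjointPart K)
  have hIcc : ∀ᶠ w : selfAdjointPart K in CStarAlgebra.approximateUnit (selfAdjointPart K),
      (w : A) ∈ Set.Icc 0 1 := by
    filter_upwards [hl.eventually_nonneg, hl.eventually_norm] with w hw hw1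
    obtain ⟨b, rfl⟩ := CStarAlgebra.nonneg_iff_eq_star_mul_self.1 hw
    have h0 : (0 : A) ≤ star (b : A) * b := star_mul_self_nonneg _
    exact ⟨h0, (CStarAlgebra.norm_le_one_iff_of_nonneg _ h0).1 hw1⟩
  refine ⟨map (↑) (CStarAlgebra.approximateUnit (selfAdjointPart K)), inferInstance,
    eventually_map.2 (hIcc.mono fun w hw => ⟨w.2.1, hw⟩), fun j hj => tendsto_map'_iff.2 ?_⟩
  have hjj : j * star j ∈ selfAdjointPart K := by
    have hmem : j * star j ∈ K := Ideal.mul_mem_right _ _ hj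
    exact ⟨hmem, by simpa using hmem⟩
  have hlim : Tendsto (fun w : selfAdjointPart K => √‖(1 - (w : A)) * (j * star j)‖)
      (CStarAlgebra.approximateUnit (selfAdjointPart K)) (𝓝 0) := by
    have h := ((hl.tendsto_mul_right ⟨_, hjj⟩).const_sub (⟨_, hjj⟩ : selfAdjointPart K)).norm.sqrt
    simpa [sub_mul] using h
  refine squeeze_zero_norm' (hIcc.mono fun w hw => Real.le_sqrt_of_sq_le ?_) hlim
  rw [Function.comp_apply, norm_one_sub_mul_sq (.of_nonneg hw.1)]
  exact (norm_mul_le _ _).trans (mul_le_of_le_one_right (norm_nonneg _) (norm_one_sub_le_one hw))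

theorem star_mem_of_isClosed {a : A} (ha : a ∈ K) : star a ∈ K := by
  obtain ⟨l, hl, hlK, hlim⟩ := exists_approximateUnit K
  have hstar : Tendsto (fun v => star a - star ((1 - v) * a)) l (𝓝 (star a)) := by
    simpa using ((hlim a ha).star.const_sub (star a))
  refine hK.mem_of_tendsto hstar (hlK.mono fun v hv => ?_)
  have hv' : star a - star ((1 - v) * a) = star a * v := by
    rw [star_mul, star_sub, star_one, (IsSelfAdjoint.of_nonneg hv.2.1).star_eq]
    noncomm_ring
  exact hv' ▸ K.mul_mem_left _ hv.1

lemma norm_mk_sq_le (a : A) :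
    ‖Ideal.Quotient.mk K a‖ ^ 2 ≤ ‖Ideal.Quotient.mk K (star a * a)‖ := by
  have hle : ∀ k ∈ K, ‖Ideal.Quotient.mk K a‖ ^ 2 ≤ ‖star a * a + k‖ := by
    intro k hk
    obtain ⟨l, hl, hlK, hlim⟩ := exists_approximateUnit K
    have hbound : Tendsto (fun v => ‖star a * a + k‖ + ‖(1 - v) * k‖) l (𝓝 ‖star a * a + k‖) := by
      simpa using (hlim k hk).norm.const_add ‖star a * a + k‖
    refine ge_of_tendsto hbound (hlK.mono fun v ⟨hvK, hv⟩ => ?_)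
    have hrep : Ideal.Quotient.mk K (a * (1 - v)) = Ideal.Quotient.mk K a := by
      rw [map_mul, map_sub, Ideal.Quotient.eq_zero_iff_mem.2 hvK, map_one, sub_zero, mul_one]
    have hstar : star (1 - v) = 1 - v :=
      ((IsSelfAdjoint.one A).sub (IsSelfAdjoint.of_nonneg hv.1)).star_eq
    have h1 := norm_one_sub_le_one hv
    calc ‖Ideal.Quotient.mk K a‖ ^ 2 ≤ ‖a * (1 - v)‖ ^ 2 := by
          rw [← hrep]
          gcongr
          exact Submodule.Quotient.norm_mk_le _ _
      _ = ‖(1 - v) * (star a * a + k) * (1 - v) - (1 - v) * k * (1 - v)‖ := by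
          rw [sq, ← CStarRing.norm_star_mul_self, star_mul, hstar]
          congr 1
          noncomm_ring
      _ ≤ ‖1 - v‖ * ‖star a * a + k‖ * ‖1 - v‖ + ‖(1 - v) * k‖ * ‖1 - v‖ :=
          (norm_sub_le _ _).trans (add_le_add norm_mul₃_le (norm_mul_le _ _))
      _ ≤ 1 * ‖star a * a + k‖ * 1 + ‖(1 - v) * k‖ * 1 := by gcongr
      _ = _ := by ring
  refine le_of_forall_pos_lt_add fun ε hε => ?_
  obtain ⟨b, hb, hbε⟩ := Submodule.Quotient.norm_mk_lt (Ideal.Quotient.mk K (star a * a)) hε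
  have hk : b - star a * a ∈ K := Ideal.Quotient.eq.1 hb
  simpa using (hle _ hk).trans_lt (by simpa using hbε)

noncomputable instance : NormedRing (A ⧸ K) :=
  { (inferInstance : Ring (A ⧸ K)), Submodule.Quotient.normedAddCommGroup K with
    norm_mul_le := fun x y => le_mul_of_forall_lt₀ fun r hr s hs => by
      obtain ⟨a, rfl, ha⟩ := QuotientAddGroup.norm_lt_iff.1 hr
      obtain ⟨b, rfl, hb⟩ := QuotientAddGroup.norm_lt_iff.1 hs
      exact (Submodule.Quotient.norm_mk_le K (a * b)).trans ((norm_mul_le a b).trans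
        (mul_le_mul ha.le hb.le (norm_nonneg b) ((norm_nonneg a).trans ha.le))) }

noncomputable instance : StarRing (A ⧸ K) where
  star := Quotient.map' star fun a b hab => by
    rw [Submodule.quotientRel_def] at hab ⊢
    simpa using star_mem_of_isClosed K hab
  star_involutive := by rintro ⟨a⟩; exact congrArg (Ideal.Quotient.mk K) (star_star a)
  star_mul := by rintro ⟨a⟩ ⟨b⟩; exact congrArg (Ideal.Quotient.mk K) (star_mul a b)
  star_add := by rintro ⟨a⟩ ⟨b⟩; exact congrArg (Ideal.Quotient.mk K) (star_add a b)

noncomputable instance : CStarAlgebra (A ⧸ K) :=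
  { (inferInstance : NormedRing (A ⧸ K)), (inferInstance : StarRing (A ⧸ K)),
    (inferInstance : Algebra ℂ (A ⧸ K)) with
    complete := (Submodule.Quotient.completeSpace K).complete
    norm_mul_self_le := by rintro ⟨a⟩; exact (sq _).symm.trans_le (norm_mk_sq_le K a)
    norm_smul_le := (Submodule.Quotient.normedSpace K ℂ).norm_smul_le
    star_smul := by rintro c ⟨a⟩; exact congrArg (Ideal.Quotient.mk K) (star_smul c a) }

/-- The quotient map of a C⋆-algebra by a closed two-sided ideal, as a `⋆`-homomorphism. -/
noncomputable def quotientMap : A →⋆ₐ[ℂ] A ⧸ K :=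
  { Ideal.Quotient.mkₐ ℂ K with map_star' := fun _ => rfl }

lemma quotientMap_surjective : Function.Surjective (quotientMap K) := Ideal.Quotient.mk_surjective

lemma quotientMap_eq_zero_iff {a : A} : quotientMap K a = 0 ↔ a ∈ K :=
  Ideal.Quotient.eq_zero_iff_mem

lemma norm_quotientMap (a : A) : ‖quotientMap K a‖ = Metric.infDist a (K : Set A) :=
  QuotientAddGroup.norm_mk (S := K.toAddSubgroup) a

variable {C : Type*} [CStarAlgebra C]

/-- The `⋆`-homomorphism induced on a quotient by a closed two-sided ideal. -/
noncomputable def quotientLift (φ : A →⋆ₐ[ℂ] C) (hφ : ∀ a ∈ K, φ a = 0) : A ⧸ K →⋆ₐ[ℂ] C :=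
  { Ideal.Quotient.liftₐ K (φ : A →ₐ[ℂ] C) hφ with
    map_star' := by rintro ⟨a⟩; exact map_star φ a }

@[simp]
lemma quotientLift_quotientMap (φ : A →⋆ₐ[ℂ] C) (hφ : ∀ a ∈ K, φ a = 0) (a : A) :
    quotientLift K φ hφ (quotientMap K a) = φ a := rfl

end Ideal

section Surjective

variable {A C : Type*} [CStarAlgebra A] [CStarAlgebra C]

lemma isClosed_ker (π : A →⋆ₐ[ℂ] C) : IsClosed (RingHom.ker π : Set A) :=
  isClosed_singleton.preimage (map_continuous π)

lemma exists_norm_lt_of_surjective {π : A →⋆ₐ[ℂ] C} (hπ : Function.Surjective π) {c : C} {r : ℝ}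
    (hc : ‖c‖ < r) : ∃ a, π a = c ∧ ‖a‖ < r := by
  have := isClosed_ker π
  let φ := quotientLift (RingHom.ker π) π fun _ ha => ha
  have hφ : Function.Injective φ := RingHom.kerLift_injective (π : A →+* C)
  obtain ⟨a, rfl⟩ := hπ c
  have hnorm : ‖quotientMap (RingHom.ker π) a‖ < r :=
    (NonUnitalStarAlgHom.norm_map φ hφ _).symm.trans_lt hc
  obtain ⟨b, hb, hbr⟩ := QuotientAddGroup.norm_lt_iff.1 hnorm
  exact ⟨b, congrArg φ hb, hbr⟩

end Surjective

section Quasicentral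

variable {A : Type*} [CStarAlgebra A]

/-- A quasi-central approximate unit of the ideal `K`, encoded as a filter on `A`: along `l`,
positive contractions of `K` act as a unit on `K` and commute asymptotically with all of `A`. -/
structure IsQuasicentralUnit (K : Ideal A) (l : Filter A) : Prop where
  neBot : l.NeBot
  eventually_mem : ∀ᶠ v in l, v ∈ K
  eventually_mem_Icc : ∀ᶠ v in l, v ∈ Set.Icc 0 1
  tendsto_one_sub_mul : ∀ j ∈ K, Tendsto (fun v => (1 - v) * j) l (𝓝 0)
  tendsto_commutator : ∀ b, Tendsto (fun v => v * b - b * v) l (𝓝 0)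

lemma norm_add_one_sub_mul_sq_le {x b u : A} (hu : u ∈ Set.Icc 0 1)
    (hx : ‖(1 - u) * x‖ * (2 * ‖b‖) ≤ 1) :
    ‖x + (1 - u) * b * u‖ ^ 2 ≤ ‖x‖ ^ 2 + (‖b‖ ^ 2 + 1) := by
  have hu1 := norm_le_one_of_mem_Icc hu
  have hu2 := norm_one_sub_le_one hu
  have hstar : star (1 - u) = 1 - u :=
    ((IsSelfAdjoint.one A).sub (IsSelfAdjoint.of_nonneg hu.1)).star_eq
  have hy : ‖(1 - u) * b * u‖ ≤ ‖b‖ := calc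
    _ ≤ ‖1 - u‖ * ‖b‖ * ‖u‖ := norm_mul₃_le
    _ ≤ 1 * ‖b‖ * 1 := by gcongr
    _ = ‖b‖ := by ring
  have hcross : ‖star x * ((1 - u) * b * u)‖ ≤ ‖(1 - u) * x‖ * ‖b‖ := calc
    _ = ‖star ((1 - u) * x) * b * u‖ := by rw [star_mul, hstar]; simp only [mul_assoc]
    _ ≤ ‖star ((1 - u) * x)‖ * ‖b‖ * ‖u‖ := norm_mul₃_le
    _ ≤ ‖(1 - u) * x‖ * ‖b‖ * 1 := by rw [norm_star]; gcongr
    _ = _ := mul_one _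
  set y := (1 - u) * b * u
  calc ‖x + y‖ ^ 2 = ‖star x * x + star x * y + star (star x * y) + star y * y‖ := by
        rw [sq, ← CStarRing.norm_star_mul_self, star_add, star_mul (star x), star_star]
        congr 1
        noncomm_ring
    _ ≤ ‖star x * x‖ + ‖star x * y‖ + ‖star (star x * y)‖ + ‖star y * y‖ := norm_add₄_le
    _ = ‖x‖ ^ 2 + 2 * ‖star x * y‖ + ‖y‖ ^ 2 := by
        rw [norm_star, CStarRing.norm_star_mul_self, CStarRing.norm_star_mul_self]
        ring
    _ ≤ ‖x‖ ^ 2 + 1 + ‖b‖ ^ 2 := by gcongr; linarith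
    _ = _ := by ring

variable {K : Ideal A}

lemma exists_sum_one_sub_mul_mul_small {l : Filter A} [l.NeBot]
    (hl : ∀ j ∈ K, Tendsto (fun v => (1 - v) * j) l (𝓝 0)) {V : Set A} (hV : V ∈ l)
    (hVK : ∀ v ∈ V, v ∈ K ∧ v ∈ Set.Icc 0 1) (F : Finset A) (m : ℕ) :
    ∃ u : Fin m → A, (∀ i, u i ∈ V) ∧
      ∀ b ∈ F, ‖∑ i, (1 - u i) * b * u i‖ ^ 2 ≤ m * (‖b‖ ^ 2 + 1) := by
  induction m with
  | zero => exact ⟨Fin.elim0, fun i => i.elim0, by simp⟩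
  | succ m ih =>
    obtain ⟨u, huV, hu⟩ := ih
    have hsmall : ∀ b ∈ F, ∀ᶠ v in l,
        ‖(1 - v) * ∑ i, (1 - u i) * b * u i‖ * (2 * ‖b‖) ≤ 1 := by
      intro b _
      have hmem : ∑ i, (1 - u i) * b * u i ∈ K :=
        sum_mem fun i _ => K.mul_mem_left _ (hVK _ (huV i)).1
      have hlim := (hl _ hmem).norm.mul_const (2 * ‖b‖)
      rw [norm_zero, zero_mul] at hlim
      exact hlim.eventually_le_const one_pos
    obtain ⟨v, hv, hvV⟩ := (((Finset.eventually_all F).2 hsmall).and hV).exists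
    refine ⟨Fin.cons v u, Fin.cases hvV huV, fun b hb => ?_⟩
    have hsum := norm_add_one_sub_mul_sq_le (hVK v hvV).2 (hv b hb)
    simp only [Fin.sum_univ_succ, Fin.cons_zero, Fin.cons_succ]
    rw [add_comm]
    push_cast
    linarith [hu b hb]

/-- The commutators of the `u i` with `b` add up to `(c (b⋆))⋆ - c b`, where
`c b = ∑ i, (1 - u i) b (u i)` has norm of order `√m` only, so averaging `m` of them makes the
commutator small. -/
lemma exists_mem_norm_commutator_lt {l : Filter A} [l.NeBot]
    (hl : ∀ j ∈ K, Tendsto (fun v => (1 - v) * j) l (𝓝 0)) {V : Set A} (hV : V ∈ l)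
    (hVK : ∀ v ∈ V, v ∈ K ∧ v ∈ Set.Icc 0 1) (hconv : Convex ℝ V) (F : Finset A) {ε : ℝ}
    (hε : 0 < ε) : ∃ v ∈ V, ∀ b ∈ F, ‖v * b - b * v‖ < ε := by
  classical
  have hsmall : ∀ b ∈ F, ∀ᶠ m : ℕ in atTop, 2 * √((‖b‖ ^ 2 + 1) / m) < ε := by
    intro b _
    have hlim := ((tendsto_const_div_atTop_nhds_zero_nat (‖b‖ ^ 2 + 1)).sqrt).const_mul 2
    rw [Real.sqrt_zero, mul_zero] at hlim
    exact hlim.eventually_lt_const hε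
  obtain ⟨m, hm, hm0⟩ := (((Finset.eventually_all F).2 hsmall).and (eventually_gt_atTop 0)).exists
  have hmR : (0 : ℝ) < m := mod_cast hm0
  obtain ⟨u, huV, hu⟩ := exists_sum_one_sub_mul_mul_small hl hV hVK (F ∪ F.image star) m
  refine ⟨∑ i, (m : ℝ)⁻¹ • u i, hconv.sum_mem (fun _ _ => by positivity) ?_ fun i _ => huV i,
    fun b hb => ?_⟩
  · simp [hmR.ne']
  have hbound : ∀ b ∈ F ∪ F.image star,
      ‖∑ i, (1 - u i) * b * u i‖ ≤ m * √((‖b‖ ^ 2 + 1) / m) := by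
    intro b hb
    refine abs_le_of_sq_le_sq' ((hu b hb).trans_eq ?_) (by positivity) |>.2
    rw [mul_pow, Real.sq_sqrt (by positivity)]
    field_simp
  have hcomm : (∑ i, (m : ℝ)⁻¹ • u i) * b - b * ∑ i, (m : ℝ)⁻¹ • u i = (m : ℝ)⁻¹ •
      (star (∑ i, (1 - u i) * star b * u i) - ∑ i, (1 - u i) * b * u i) := by
    simp only [star_sum, star_mul, star_star, star_sub, star_one, Finset.sum_mul, Finset.mul_sum,
      ← Finset.sum_sub_distrib, Finset.smul_sum, smul_mul_assoc, mul_smul_comm, ← smul_sub]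
    refine Finset.sum_congr rfl fun i _ => ?_
    rw [(IsSelfAdjoint.of_nonneg (hVK _ (huV i)).2.1).star_eq]
    congr 1
    noncomm_ring
  have h1 := hbound b (Finset.mem_union_left _ hb)
  have h2 := hbound (star b) (Finset.mem_union_right _ (Finset.mem_image_of_mem _ hb))
  rw [norm_star] at h2
  rw [hcomm, norm_smul, Real.norm_of_nonneg (by positivity), inv_mul_lt_iff₀ hmR]
  calc _ ≤ _ := norm_sub_le _ _
    _ ≤ m * (2 * √((‖b‖ ^ 2 + 1) / m)) := by rw [norm_star]; linarith
    _ < m * ε := by gcongr; exact hm b hb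

lemma convex_norm_one_sub_mul_lt (j : A) (ε : ℝ) : Convex ℝ {v : A | ‖(1 - v) * j‖ < ε} := by
  have hmap : {v : A | ‖(1 - v) * j‖ < ε} =
      (LinearMap.mulRight ℝ j : A →ₗ[ℝ] A) ⁻¹' Metric.ball j ε := by
    ext v
    simp [dist_eq_norm, norm_sub_rev, sub_mul]
  exact hmap ▸ (convex_ball j ε).linear_preimage _

theorem exists_isQuasicentralUnit [K.IsTwoSided] [IsClosed (K : Set A)] :
    ∃ l, IsQuasicentralUnit K l := by
  classical
  obtain ⟨l, _, hlK, hl⟩ := exists_approximateUnit K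
  have hstep : ∀ p : Finset A × ℕ, ∃ v, (v ∈ K ∧ v ∈ Set.Icc 0 1) ∧
      (∀ j ∈ p.1, j ∈ K → ‖(1 - v) * j‖ < 1 / (p.2 + 1 : ℝ)) ∧
      ∀ b ∈ p.1, ‖v * b - b * v‖ < 1 / (p.2 + 1 : ℝ) := by
    intro ⟨F, n⟩
    have hε : 0 < 1 / (n + 1 : ℝ) := by positivity
    let V : Set A := ((K : Set A) ∩ Set.Icc 0 1) ∩
      ⋂ j ∈ F.filter (· ∈ K), {v | ‖(1 - v) * j‖ < 1 / (n + 1 : ℝ)}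
    have hV : V ∈ l := inter_mem hlK <| (biInter_finset_mem _).2 fun j hj => by
      have hlim := (hl j (Finset.mem_filter.1 hj).2).norm
      rw [norm_zero] at hlim
      exact hlim.eventually_lt_const hε
    have hconv : Convex ℝ V :=
      (((K.restrictScalars ℝ).convex).inter (convex_Icc 0 1)).inter
        (convex_iInter₂ fun j _ => convex_norm_one_sub_mul_lt j _)
    obtain ⟨v, hv, hcomm⟩ := exists_mem_norm_commutator_lt hl hV (fun v hv => hv.1) hconv F hε
    refine ⟨v, hv.1, fun j hj hjK => ?_, hcomm⟩
    exact Set.mem_iInter₂.1 hv.2 j (Finset.mem_filter.2 ⟨hj, hjK⟩)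
  choose v hv hunit hcomm using hstep
  have hlim : Tendsto (fun p : Finset A × ℕ => 1 / (p.2 + 1 : ℝ)) atTop (𝓝 0) :=
    tendsto_one_div_add_atTop_nhds_zero_nat.comp <| by
      rw [← prod_atTop_atTop_eq]; exact tendsto_snd
  have hmem : ∀ a : A, ∀ᶠ p : Finset A × ℕ in atTop, a ∈ p.1 := fun a =>
    (eventually_ge_atTop (({a}, 0) : Finset A × ℕ)).mono fun p hp =>
      Finset.singleton_subset_iff.1 hp.1
  refine ⟨map v atTop, inferInstance, eventually_map.2 (.of_forall fun p => (hv p).1),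
    eventually_map.2 (.of_forall fun p => (hv p).2), fun j hj => ?_, fun b => ?_⟩
  · exact tendsto_map'_iff.2 <|
      squeeze_zero_norm' ((hmem j).mono fun p hp => (hunit p j hp hj).le) hlim
  · exact tendsto_map'_iff.2 <|
      squeeze_zero_norm' ((hmem b).mono fun p hp => (hcomm p b hp).le) hlim

end Quasicentral

section Partition

variable {A : Type*} [CStarAlgebra A]

lemma star_mul_self_le_of_norm_le {a : A} {M : ℝ} (ha : ‖a‖ ≤ M) :
    star a * a ≤ algebraMap ℝ A (M ^ 2) :=
  CStarAlgebra.star_mul_le_algebraMap_norm_sq.trans (algebraMap_mono A (by gcongr))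

lemma norm_le_of_star_mul_self_le {a : A} {M : ℝ} (hM : 0 ≤ M)
    (ha : star a * a ≤ algebraMap ℝ A (M ^ 2)) : ‖a‖ ≤ M := by
  refine abs_le_of_sq_le_sq' ?_ hM |>.2
  rw [sq, ← CStarRing.norm_star_mul_self]
  exact (CStarAlgebra.norm_le_iff_le_algebraMap _ (sq_nonneg M) (star_mul_self_nonneg a)).2 ha

lemma star_mul_self_add_le {s c : A} (hs : IsSelfAdjoint s) (hc : IsSelfAdjoint c)
    (hsc : Commute s c) (h1 : s * s + c * c = 1) (p q : A) :
    star (s * p + c * q) * (s * p + c * q) ≤ star p * p + star q * q := by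
  have hsum : star (s * p + c * q) * (s * p + c * q) + star (c * p - s * q) * (c * p - s * q) =
      star p * (s * s + c * c) * p + star q * (s * s + c * c) * q := by
    simp only [star_add, star_sub, star_mul, hs.star_eq, hc.star_eq]
    have hcross : ∀ x y : A, x * s * (c * y) = x * c * (s * y) := fun x y => by
      rw [mul_assoc x, ← mul_assoc s, hsc.eq]
      simp only [mul_assoc]
    simp only [mul_add, add_mul, mul_sub, sub_mul, hcross]
    noncomm_ring
  rw [h1, mul_one, mul_one] at hsum
  exact hsum ▸ le_add_of_nonneg_right (star_mul_self_nonneg _)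

/-- `s b s + c a c` is the compression of `b ⊕ a` by the isometry with entries `s` and `c`. -/
lemma norm_conj_add_conj_le {s c a b : A} {M : ℝ} (hs : IsSelfAdjoint s) (hc : IsSelfAdjoint c)
    (hsc : Commute s c) (h1 : s * s + c * c = 1) (hb : ‖b‖ ≤ M) (ha : ‖a‖ ≤ M) :
    ‖s * b * s + c * a * c‖ ≤ M := by
  refine norm_le_of_star_mul_self_le ((norm_nonneg a).trans ha) ?_
  have hconj : ∀ {u x : A}, IsSelfAdjoint u → ‖x‖ ≤ M →
      star (x * u) * (x * u) ≤ algebraMap ℝ A (M ^ 2) * (u * u) := by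
    intro u x hu hx
    have h := star_left_conjugate_le_conjugate (star_mul_self_le_of_norm_le hx) u
    rw [hu.star_eq, ← Algebra.commutes, mul_assoc] at h
    simpa only [star_mul, hu.star_eq, mul_assoc] using h
  rw [mul_assoc, mul_assoc]
  calc _ ≤ star (b * s) * (b * s) + star (a * c) * (a * c) := star_mul_self_add_le hs hc hsc h1 _ _
    _ ≤ algebraMap ℝ A (M ^ 2) * (s * s) + algebraMap ℝ A (M ^ 2) * (c * c) :=
        add_le_add (hconj hs hb) (hconj hc ha)
    _ = _ := by rw [← mul_add, h1, mul_one]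

lemma norm_conj_add_conj_one_sub_le {p a b : A} (hp : IsStarProjection p) {M : ℝ}
    (ha : ‖a‖ ≤ M) (hb : ‖b‖ ≤ M) : ‖p * a * p + (1 - p) * b * (1 - p)‖ ≤ M := by
  refine norm_conj_add_conj_le hp.isSelfAdjoint hp.one_sub.isSelfAdjoint
    ((Commute.one_right _).sub_right (.refl _)) ?_ ha hb
  rw [hp.one_sub.isIdempotentElem, hp.isIdempotentElem, add_sub_cancel]

/-- The bounded families that asymptotically commute with every element of `A` along `l`. -/
def asymptoticallyCentral {ι : Type*} (l : Filter ι) : Subalgebra ℝ (ι → A) where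
  carrier := {f | f =O[l] (fun _ => (1 : ℝ)) ∧
    ∀ b, Tendsto (fun v => f v * b - b * f v) l (𝓝 0)}
  add_mem' {f g} hf hg := by
    refine ⟨hf.1.add hg.1, fun b => ?_⟩
    have h := (hf.2 b).add (hg.2 b)
    rw [add_zero] at h
    refine h.congr fun v => ?_
    rw [Pi.add_apply]
    noncomm_ring
  mul_mem' {f g} hf hg := by
    refine ⟨by simpa using hf.1.mul hg.1, fun b => ?_⟩
    have h := (isBoundedUnder_le_mul_tendsto_zero hf.1.isBoundedUnder_le (hg.2 b)).add
      ((hf.2 b).zero_mul_isBoundedUnder_le hg.1.isBoundedUnder_le)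
    rw [add_zero] at h
    refine h.congr fun v => ?_
    rw [Pi.mul_apply]
    noncomm_ring
  algebraMap_mem' r :=
    ⟨isBigO_const_const (algebraMap ℝ A r) one_ne_zero l,
      fun b => tendsto_const_nhds.congr fun v => by
        rw [Pi.algebraMap_apply, Algebra.commutes, sub_self]⟩

variable {ι : Type*} {l : Filter ι}

lemma mem_asymptoticallyCentral_of_approx {f : ι → A}
    (h : ∀ ε > 0, ∃ g ∈ asymptoticallyCentral l, ∀ᶠ v in l, ‖f v - g v‖ ≤ ε) :
    f ∈ asymptoticallyCentral l := by
  refine ⟨?_, fun b => ?_⟩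
  · obtain ⟨g, hg, hfg⟩ := h 1 one_pos
    have hsub : (fun v => f v - g v) =O[l] (fun _ => (1 : ℝ)) :=
      .of_bound 1 (hfg.mono fun v hv => by simpa using hv)
    simpa using hsub.add hg.1
  · refine Metric.tendsto_nhds.2 fun ε hε => ?_
    obtain ⟨g, hg, hfg⟩ := h (ε / (4 * (‖b‖ + 1))) (by positivity)
    filter_upwards [hfg, Metric.tendsto_nhds.1 (hg.2 b) (ε / 2) (half_pos hε)] with v hv hgv
    rw [dist_zero_right] at hgv ⊢
    calc ‖f v * b - b * f v‖
        = ‖(f v - g v) * b - b * (f v - g v) + (g v * b - b * g v)‖ := by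
          congr 1
          noncomm_ring
      _ ≤ ‖f v - g v‖ * ‖b‖ + ‖b‖ * ‖f v - g v‖ + ‖g v * b - b * g v‖ :=
          (norm_add_le _ _).trans (add_le_add_left ((norm_sub_le _ _).trans
            (add_le_add (norm_mul_le _ _) (norm_mul_le _ _))) _)
      _ < ε / 2 + ε / 2 := by
          refine add_lt_add_of_le_of_lt ?_ hgv
          calc _ = ‖f v - g v‖ * (2 * ‖b‖) := by ring
            _ ≤ ε / (4 * (‖b‖ + 1)) * (2 * (‖b‖ + 1)) := by gcongr; linarith
            _ = ε / 2 := by field_simp; norm_num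
      _ = ε := add_halves ε

lemma spectrum_subset_Icc {v : A} (hv : v ∈ Set.Icc 0 1) : spectrum ℝ v ⊆ Set.Icc 0 1 := fun t ht =>
  ⟨spectrum_nonneg_of_nonneg hv.1 ht,
    (le_algebraMap_iff_spectrum_le (ha := .of_nonneg hv.1)).1 (by simpa using hv.2) t ht⟩

/-- By Weierstrass approximation on `[0, 1]`. -/
lemma cfc_mem_asymptoticallyCentral {f : ι → A} (hf : f ∈ asymptoticallyCentral l)
    (hIcc : ∀ᶠ v in l, f v ∈ Set.Icc 0 1) {h : ℝ → ℝ} (hh : Continuous h) :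
    (fun v => cfc h (f v)) ∈ asymptoticallyCentral l := by
  refine mem_asymptoticallyCentral_of_approx fun ε hε => ?_
  obtain ⟨p, hp⟩ := exists_polynomial_near_of_continuousOn 0 1 h hh.continuousOn ε hε
  refine ⟨Polynomial.aeval f p, Algebra.adjoin_le (Set.singleton_subset_iff.2 hf)
    (Polynomial.aeval_mem_adjoin_singleton ℝ f), hIcc.mono fun v hv => ?_⟩
  have hsa := IsSelfAdjoint.of_nonneg hv.1
  rw [Polynomial.aeval_pi_apply₂, ← cfc_polynomial p (f v), ← cfc_sub h p.eval (f v) hh.continuousOn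
    p.continuous.continuousOn]
  refine norm_cfc_le hε.le fun t ht => ?_
  rw [norm_sub_rev]
  exact (hp t (spectrum_subset_Icc hv ht)).le

/-- With `v` running through a quasi-central approximate unit, `s = √v` and `c = √(1 - v)` form a
quasi-central partition of unity subordinate to `K`. -/
theorem exists_quasicentral_partition (K : Ideal A) [K.IsTwoSided] [IsClosed (K : Set A)] :
    ∃ (l : Filter A) (s c : A → A), l.NeBot ∧ s ∈ asymptoticallyCentral l ∧
      c ∈ asymptoticallyCentral l ∧ (∀ j ∈ K, Tendsto (fun v => c v * j) l (𝓝 0)) ∧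
      ∀ᶠ v in l, s v ∈ K ∧ IsSelfAdjoint (s v) ∧ IsSelfAdjoint (c v) ∧ Commute (s v) (c v) ∧
        s v * s v + c v * c v = 1 := by
  obtain ⟨l, hl⟩ := exists_isQuasicentralUnit (K := K)
  have hid : id ∈ asymptoticallyCentral l := by
    refine ⟨.of_bound 1 (hl.eventually_mem_Icc.mono fun v hv => ?_), hl.tendsto_commutator⟩
    simpa using norm_le_one_of_mem_Icc hv
  have hcont : Continuous fun t : ℝ => √(1 - t) := by fun_prop
  have hcsa : ∀ v : A, IsSelfAdjoint (cfc (fun t : ℝ => √(1 - t)) v) := fun v => cfc_predicate _ _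
  have hcsq : ∀ᶠ v in l, cfc (fun t : ℝ => √(1 - t)) v * cfc (fun t : ℝ => √(1 - t)) v = 1 - v :=
    hl.eventually_mem_Icc.mono fun v hv => by
      have hsa := IsSelfAdjoint.of_nonneg hv.1
      rw [← cfc_mul _ _ v, cfc_congr (g := fun t : ℝ => 1 - t) fun t ht =>
        Real.mul_self_sqrt (sub_nonneg.2 (spectrum_subset_Icc hv ht).2), cfc_sub _ _ v,
        cfc_const_one ℝ v, cfc_id' ℝ v]
  refine ⟨l, cfc Real.sqrt, cfc fun t => √(1 - t), hl.neBot,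
    cfc_mem_asymptoticallyCentral hid hl.eventually_mem_Icc Real.continuous_sqrt,
    cfc_mem_asymptoticallyCentral hid hl.eventually_mem_Icc hcont, fun j hj => ?_, ?_⟩
  · have hlim : Tendsto (fun v => √(‖star j‖ * ‖(1 - v) * j‖)) l (𝓝 0) := by
      simpa using ((hl.tendsto_one_sub_mul j hj).norm.const_mul ‖star j‖).sqrt
    refine squeeze_zero_norm' (hcsq.mono fun v hv => Real.le_sqrt_of_sq_le ?_) hlim
    rw [sq, ← CStarRing.norm_star_mul_self, star_mul, (hcsa v).star_eq, mul_assoc,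
      ← mul_assoc (cfc _ _), hv]
    exact norm_mul_le _ _
  · filter_upwards [hl.eventually_mem, hl.eventually_mem_Icc, hcsq] with v hvK hv hc
    have hsa := IsSelfAdjoint.of_nonneg hv.1
    refine ⟨?_, cfc_predicate _ _, hcsa v, cfc_commute_cfc _ _ v, ?_⟩
    · rw [← quotientMap_eq_zero_iff K, StarAlgHomClass.map_cfc (quotientMap K) Real.sqrt v,
        (quotientMap_eq_zero_iff K).2 hvK]
      simp
    · rw [hc, ← cfc_mul _ _ v, cfc_congr (g := fun t : ℝ => t) fun t ht =>
        Real.mul_self_sqrt (spectrum_subset_Icc hv ht).1, cfc_id' ℝ v, add_sub_cancel]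

end Partition

section NormCorrection

variable {A : Type*} [CStarAlgebra A]

variable (A) in
/-- The bounded operators on `A` that are asymptotically left linear over asymptotically central
families. -/
def quasilocal : Subalgebra ℂ (A →L[ℂ] A) where
  carrier := {Φ | ∀ (l : Filter A), ∀ u ∈ asymptoticallyCentral l, ∀ Z,
    Tendsto (fun v => Φ (u v * Z) - u v * Φ Z) l (𝓝 0)}
  add_mem' {Φ Ψ} hΦ hΨ l u hu Z := by
    have h := (hΦ l u hu Z).add (hΨ l u hu Z)
    rw [add_zero] at h
    refine h.congr fun v => ?_
    rw [add_apply, add_apply, mul_add]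
    abel
  mul_mem' {Φ Ψ} hΦ hΨ l u hu Z := by
    have h := ((Φ.continuous.tendsto 0).comp (hΨ l u hu Z)).add (hΦ l u hu (Ψ Z))
    rw [map_zero, add_zero] at h
    refine h.congr fun v => ?_
    rw [Function.comp_apply, map_sub, sub_add_sub_cancel]
    rfl
  algebraMap_mem' r l u _ Z := tendsto_const_nhds.congr fun v => by
    simp [Algebra.algebraMap_eq_smul_one]

lemma mulLeftRight_mem_quasilocal (a b : A) :
    ContinuousLinearMap.mulLeftRight ℂ A a b ∈ quasilocal A := by
  intro l u hu Z
  have h := ((hu.2 a).neg).mul_const (Z * b)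
  rw [neg_zero, zero_mul] at h
  refine h.congr fun v => ?_
  simp only [ContinuousLinearMap.mulLeftRight_apply]
  noncomm_ring

variable {C : Type*} [CStarAlgebra C] {π : A →⋆ₐ[ℂ] C} {Φ : A →L[ℂ] A} {D Z : A}

/-- If `s² + c² = 1` then `x - s² (x - b)` is approximately the compression `s b s + c a c`, as soon
as `a` is close to `x` over `c`. -/
lemma tendsto_sub_conj {l : Filter A} {s c : A → A} (hs : s ∈ asymptoticallyCentral l)
    (hc : c ∈ asymptoticallyCentral l) (h1 : ∀ᶠ v in l, s v * s v + c v * c v = 1) {x a b : A}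
    (hxa : Tendsto (fun v => c v * (x - a)) l (𝓝 0)) :
    Tendsto (fun v => x - s v * s v * (x - b) - (s v * b * s v + c v * a * c v)) l (𝓝 0) := by
  have hsb := isBoundedUnder_le_mul_tendsto_zero hs.1.isBoundedUnder_le (hs.2 b)
  have hsum := (hc.2 a).add hxa
  rw [add_zero] at hsum
  have hlim := hsb.add (isBoundedUnder_le_mul_tendsto_zero hc.1.isBoundedUnder_le hsum)
  rw [add_zero] at hlim
  refine hlim.congr' (h1.mono fun v hv => ?_)
  calc s v * (s v * b - b * s v) + c v * (c v * a - a * c v + c v * (x - a))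
      = (s v * s v + c v * c v) * x - s v * s v * (x - b) - (s v * b * s v + c v * a * c v) := by
        noncomm_ring
    _ = _ := by rw [hv, one_mul]

variable {C : Type*} [CStarAlgebra C] {π : A →⋆ₐ[ℂ] C} {Φ : A →L[ℂ] A} {D Z : A}

lemma exists_norm_add_map_lt (hπ : Function.Surjective π) (hΦ : Φ ∈ quasilocal A) {t r ε : ℝ}
    (ht : 0 ≤ t) (hε : 0 < ε) (hb : ‖D + (1 - t) • Φ Z‖ ≤ r) (hr : ‖π (D + Φ Z)‖ < r) :
    ∃ Z', ‖D + Φ Z'‖ < r + ε ∧ ‖Φ Z' - Φ Z‖ < t * ‖Φ Z‖ + ε ∧ ‖π (Φ Z' - Φ Z)‖ < ε := by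
  obtain ⟨a, ha, har⟩ := exists_norm_lt_of_surjective hπ hr
  have : IsClosed (RingHom.ker π : Set A) := isClosed_ker π
  obtain ⟨l, s, c, hl, hs, hc, hcK, hsc⟩ := exists_quasicentral_partition (RingHom.ker π)
  set b := D + (1 - t) • Φ Z with hbdef
  let Z' : A → A := fun v => Z - t • (s v * s v * Z)
  let err : A → A := fun v => t • (Φ (s v * s v * Z) - s v * s v * Φ Z)
  have hZ' : ∀ v, Φ (Z' v) - Φ Z = -(t • (s v * s v * Φ Z)) - err v := fun v => by
    simp only [Z', err, map_sub, ContinuousLinearMap.map_smul_of_tower, smul_sub]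
    abel
  have herr : Tendsto err l (𝓝 0) := smul_zero (A := A) t ▸ (hΦ l _ (mul_mem hs hs) Z).const_smul t
  have hconj : Tendsto (fun v => D + Φ (Z' v) - (s v * b * s v + c v * a * c v)) l (𝓝 0) := by
    have hlim := (tendsto_sub_conj hs hc (hsc.mono fun v hv => hv.2.2.2.2) (b := b)
      (hcK (D + Φ Z - a) (by rw [RingHom.mem_ker, map_sub, ha, sub_self]))).sub herr
    rw [sub_zero] at hlim
    refine hlim.congr fun v => ?_
    have hxb : D + Φ Z - b = t • Φ Z := by
      rw [hbdef, sub_smul, one_smul]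
      abel
    rw [← sub_add_cancel (Φ (Z' v)) (Φ Z), hZ', hxb, mul_smul_comm]
    abel
  have hev := (Metric.tendsto_nhds.1 hconj ε hε).and (Metric.tendsto_nhds.1 herr ε hε)
  obtain ⟨v, ⟨hv, hverr⟩, hsK, hssa, hcsa, hcomm, h1⟩ := (hev.and hsc).exists
  rw [dist_zero_right] at hv hverr
  refine ⟨Z' v, ?_, ?_, ?_⟩
  · have hM := norm_conj_add_conj_le hssa hcsa hcomm h1 hb har.le
    linarith [norm_le_norm_add_norm_sub' (D + Φ (Z' v)) (s v * b * s v + c v * a * c v)]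
  · have hss : ‖s v * s v‖ ≤ 1 := by
      simpa using norm_conj_add_conj_le (a := (0 : A)) hssa hcsa hcomm h1 norm_one_le_one (by simp)
    rw [hZ']
    refine (norm_sub_le _ _).trans_lt (add_lt_add_of_le_of_lt ?_ hverr)
    rw [norm_neg, norm_smul, Real.norm_of_nonneg ht]
    gcongr
    exact norm_mul_le_of_le hss le_rfl |>.trans_eq (one_mul _)
  · have hπerr : π (Φ (Z' v) - Φ Z) = -π (err v) := by
      have hsv : π (s v * s v * (t • Φ Z)) = 0 :=
        Ideal.mul_mem_right _ _ (Ideal.mul_mem_left _ _ hsK)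
      rw [hZ', map_sub, map_neg, ← mul_smul_comm, hsv, neg_zero, zero_sub]
    rw [hπerr, norm_neg]
    exact (NonUnitalStarAlgHom.norm_apply_le π _).trans_lt hverr

lemma norm_add_one_sub_smul_le_one {B : A} {d ω : ℝ} (hd : d < 1) (hω : 0 ≤ ω) (hD : ‖D‖ ≤ d)
    (hB : ‖D + B‖ ≤ 1 + ω) : ‖D + (1 - ω / (1 + ω - d)) • B‖ ≤ 1 := by
  have hpos : 0 < 1 + ω - d := by linarith
  have ht : 0 ≤ ω / (1 + ω - d) := by positivity
  have ht1 : ω / (1 + ω - d) ≤ 1 := (div_le_one hpos).2 (by linarith)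
  calc _ = ‖(ω / (1 + ω - d)) • D + (1 - ω / (1 + ω - d)) • (D + B)‖ := by
        congr 1
        module
    _ ≤ ω / (1 + ω - d) * d + (1 - ω / (1 + ω - d)) * (1 + ω) := by
        refine (norm_add_le _ _).trans ?_
        rw [norm_smul, norm_smul, Real.norm_of_nonneg ht, Real.norm_of_nonneg (sub_nonneg.2 ht1)]
        gcongr
    _ = 1 := by
        field_simp
        ring

lemma norm_le_add_one_of_norm_add_le {V : A} {d r : ℝ} (hd : d < 1) (hD : ‖D‖ ≤ d)
    (hV : ‖D + V‖ ≤ r) : ‖V‖ ≤ r + 1 := by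
  linarith [norm_le_add_norm_add' D V]

lemma div_mul_norm_le_of_norm_add_le {V : A} {d ω : ℝ} (hd : d < 1) (hD : ‖D‖ ≤ d)
    (hω : ω ∈ Set.Icc 0 2) (hV : ‖D + V‖ ≤ 1 + ω) :
    ω / (1 + ω - d) * ‖V‖ ≤ 4 / (1 - d) * ω := by
  obtain ⟨hω0, hω2⟩ := hω
  have : 0 < 1 - d := sub_pos.2 hd
  have hV4 : ‖V‖ ≤ 4 := (norm_le_add_one_of_norm_add_le hd hD hV).trans (by linarith)
  calc ω / (1 + ω - d) * ‖V‖ ≤ ω / (1 - d) * 4 := by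
        gcongr
        linarith
    _ = 4 / (1 - d) * ω := by ring

/- The excess `ω` of the norm over `1` is removed over `ker π`, the excess `η` of the norm of the
image by a contraction towards `D`. -/
theorem exists_norm_add_map_le_one (hπ : Function.Surjective π) (hΦ : Φ ∈ quasilocal A) {d ω η : ℝ}
    (hd : d < 1) (hD : ‖D‖ ≤ d) (hω : ω ∈ Set.Icc 0 1) (hη : η ∈ Set.Ioc 0 1)
    (hZ : ‖D + Φ Z‖ ≤ 1 + ω) (hπZ : ‖π (D + Φ Z)‖ < 1 + η) :
    ∃ Z', ‖D + Φ Z'‖ ≤ 1 ∧ ‖Φ Z' - Φ Z‖ ≤ 9 / (1 - d) * (ω + η) ∧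
      ‖π (Φ Z' - Φ Z)‖ ≤ 9 / (1 - d) * η := by
  have hd0 : 0 ≤ d := (norm_nonneg D).trans hD
  have hd1 : 0 < 1 - d := sub_pos.2 hd
  obtain ⟨hω0, hω1⟩ := hω
  obtain ⟨hη0, hη1⟩ := hη
  have hωpos : 0 < 1 + ω - d := by linarith
  have hηpos : 0 < 1 + 2 * η - d := by linarith
  obtain ⟨Z₁, hZ₁, hdist, hπdist⟩ := exists_norm_add_map_lt hπ hΦ (by positivity) hη0
    ((norm_add_one_sub_smul_le_one hd hω0 hD hZ).trans (by linarith)) hπZ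
  rw [add_assoc, ← two_mul] at hZ₁
  set t := 2 * η / (1 + 2 * η - d)
  have ht0 : 0 ≤ t := by positivity
  have hshrink : Φ ((1 - t) • Z₁) = (1 - t) • Φ Z₁ := ContinuousLinearMap.map_smul_of_tower _ _ _
  have hdiff : Φ ((1 - t) • Z₁) - Φ Z = (Φ Z₁ - Φ Z) - t • Φ Z₁ := by
    rw [hshrink]
    module
  have htΦ : ‖t • Φ Z₁‖ ≤ 4 / (1 - d) * (2 * η) := by
    rw [norm_smul, Real.norm_of_nonneg ht0]
    exact div_mul_norm_le_of_norm_add_le hd hD ⟨by linarith, by linarith⟩ hZ₁.le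
  have hωΦ := div_mul_norm_le_of_norm_add_le hd hD ⟨hω0, hω1.trans one_le_two⟩ hZ
  have hη' : η ≤ 1 / (1 - d) * η := le_mul_of_one_le_left hη0.le ((one_le_div hd1).2 (by linarith))
  have hω' : 0 ≤ 1 / (1 - d) * ω := by positivity
  refine ⟨(1 - t) • Z₁, ?_, ?_, ?_⟩
  · rw [hshrink]
    exact norm_add_one_sub_smul_le_one hd (by positivity) hD hZ₁.le
  · rw [hdiff]
    refine (norm_sub_le _ _).trans ((add_le_add hdist.le htΦ).trans ?_)
    linear_combination hωΦ + hη' + 5 * hω'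
  · rw [hdiff, map_sub]
    refine (norm_sub_le _ _).trans ((add_le_add hπdist.le
      ((NonUnitalStarAlgHom.norm_apply_le π _).trans htΦ)).trans ?_)
    linear_combination hη'

end NormCorrection

section Cut

/-- The cut-off function that is `0` on `(-∞, 0]`, the identity on `[0, 1]`, and `1` on `[1, ∞)`. -/
noncomputable def ramp (t : ℝ) : ℝ := max 0 (min 1 t)

@[fun_prop]
lemma continuous_ramp : Continuous ramp := by
  unfold ramp
  fun_prop

lemma ramp_of_nonpos {t : ℝ} (ht : t ≤ 0) : ramp t = 0 := max_eq_left (min_le_of_right_le ht)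

lemma ramp_of_one_le {t : ℝ} (ht : 1 ≤ t) : ramp t = 1 := by
  rw [ramp, min_eq_left ht, max_eq_right zero_le_one]

lemma ramp_mem_Icc (t : ℝ) : ramp t ∈ Set.Icc 0 1 :=
  ⟨le_max_left _ _, max_le zero_le_one (min_le_left _ _)⟩

lemma ramp_le_self {t : ℝ} (ht : 0 ≤ t) : ramp t ≤ t := max_le ht (min_le_right _ _)

/-- The damping function `t ↦ (δ + t)^(-1/2)`, extended evenly to the negative half-line. -/
noncomputable def damp (δ t : ℝ) : ℝ := (√(δ + |t|))⁻¹

lemma damp_nonneg (δ t : ℝ) : 0 ≤ damp δ t := by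
  unfold damp
  positivity

lemma continuous_damp {δ : ℝ} (hδ : 0 < δ) : Continuous (damp δ) := by
  unfold damp
  exact Continuous.inv₀ (by fun_prop) fun t => by positivity

variable {A : Type*} [CStarAlgebra A]

lemma cfc_mul_self {a : A} (ha : IsSelfAdjoint a) {f : ℝ → ℝ} (hf : Continuous f) :
    cfc f a * a = cfc (fun t => f t * t) a := by
  rw [cfc_mul f _ a hf.continuousOn, cfc_id' ℝ a]

lemma cfc_mul_self_mul_cfc {a : A} (ha : IsSelfAdjoint a) {f : ℝ → ℝ} (hf : Continuous f) :
    cfc f a * a * cfc f a = cfc (fun t => f t * t * f t) a := by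
  rw [cfc_mul_self ha hf, cfc_mul _ f a]

/-- The positive element `X⋆ (δ + W W⋆)^(-1/2) X`, large where `X` is large compared to `W⋆`. -/
noncomputable def cutWeight (δ : ℝ) (W X : A) : A :=
  star X * cfc (damp δ) (W * star W) * X

/-- The spectral cut-off of `cutWeight` at height `1`. -/
noncomputable def outerCut (δ : ℝ) (W X : A) : A := cfc ramp (cutWeight δ W X)

/-- The spectral cut-off of `cutWeight` at height `2`, which is absorbed by `outerCut`. -/
noncomputable def innerCut (δ : ℝ) (W X : A) : A := cfc (fun t => ramp (t - 1)) (cutWeight δ W X)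

variable {δ : ℝ} {W X : A}

lemma cutWeight_nonneg : 0 ≤ cutWeight δ W X :=
  star_left_conjugate_nonneg (cfc_nonneg fun t _ => damp_nonneg δ t) X

lemma isSelfAdjoint_cutWeight : IsSelfAdjoint (cutWeight δ W X) := .of_nonneg cutWeight_nonneg

lemma isSelfAdjoint_outerCut : IsSelfAdjoint (outerCut δ W X) := cfc_predicate _ _

lemma isSelfAdjoint_innerCut : IsSelfAdjoint (innerCut δ W X) := cfc_predicate _ _

lemma norm_cfc_le_one {f : ℝ → ℝ} (hf : ∀ t, f t ∈ Set.Icc 0 1) (a : A) : ‖cfc f a‖ ≤ 1 :=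
  norm_cfc_le zero_le_one fun t _ => abs_le.2 ⟨neg_one_lt_zero.le.trans (hf t).1, (hf t).2⟩

lemma norm_outerCut_le_one : ‖outerCut δ W X‖ ≤ 1 := norm_cfc_le_one ramp_mem_Icc _

lemma norm_innerCut_le_one : ‖innerCut δ W X‖ ≤ 1 := norm_cfc_le_one (fun _ => ramp_mem_Icc _) _

lemma innerCut_mul_outerCut : innerCut δ W X * outerCut δ W X = innerCut δ W X := by
  rw [innerCut, outerCut, ← cfc_mul _ _ _]
  refine cfc_congr fun t _ => ?_
  rcases le_total t 1 with h | h
  · simp only [ramp_of_nonpos (sub_nonpos.2 h), zero_mul]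
  · simp only [ramp_of_one_le h, mul_one]

lemma innerCut_mul_one_sub_outerCut : innerCut δ W X * (1 - outerCut δ W X) = 0 := by
  rw [mul_sub, innerCut_mul_outerCut, mul_one, sub_self]

lemma innerCut_mul_eq_zero {b : A} (hb : X * b = 0) : innerCut δ W X * b = 0 := by
  have hcont : Continuous fun t : ℝ => ramp (t - 1) * (max 1 t)⁻¹ :=
    Continuous.mul (by fun_prop) (Continuous.inv₀ (by fun_prop) fun t => by positivity)
  have hfactor : innerCut δ W X =
      cfc (fun t => ramp (t - 1) * (max 1 t)⁻¹) (cutWeight δ W X) * cutWeight δ W X := by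
    rw [cfc_mul_self isSelfAdjoint_cutWeight hcont, innerCut]
    refine cfc_congr fun t _ => ?_
    rcases le_total t 1 with h | h
    · simp only [ramp_of_nonpos (sub_nonpos.2 h), zero_mul]
    · simp only [max_eq_right h, mul_assoc, inv_mul_cancel₀ (zero_lt_one.trans_le h).ne', mul_one]
  rw [hfactor, cutWeight, mul_assoc, mul_assoc _ X, hb, mul_zero, mul_zero]

lemma commute_cutWeight {P : A} (hX : Commute X P) (hX' : Commute (star X) P) (hW : Commute W P)
    (hW' : Commute (star W) P) : Commute (cutWeight δ W X) P :=
  (hX'.mul_left ((hW.mul_left hW').cfc_real _)).mul_left hX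

lemma map_cfc {C : Type*} [CStarAlgebra C] (π : A →⋆ₐ[ℂ] C) {a : A} (ha : IsSelfAdjoint a)
    {f : ℝ → ℝ} (hf : Continuous f) : π (cfc f a) = cfc f (π a) :=
  StarAlgHomClass.map_cfc π f a hf.continuousOn (map_continuous π) ha (ha.map π)

lemma map_cutWeight {C : Type*} [CStarAlgebra C] (π : A →⋆ₐ[ℂ] C) (hδ : 0 < δ) :
    π (cutWeight δ W X) = cutWeight δ (π W) (π X) := by
  simp only [cutWeight, map_mul, map_star, map_cfc π (.mul_star_self W) (continuous_damp hδ)]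

lemma map_outerCut {C : Type*} [CStarAlgebra C] (π : A →⋆ₐ[ℂ] C) (hδ : 0 < δ) :
    π (outerCut δ W X) = outerCut δ (π W) (π X) := by
  rw [outerCut, map_cfc π isSelfAdjoint_cutWeight continuous_ramp, map_cutWeight π hδ, outerCut]

lemma map_innerCut {C : Type*} [CStarAlgebra C] (π : A →⋆ₐ[ℂ] C) (hδ : 0 < δ) :
    π (innerCut δ W X) = innerCut δ (π W) (π X) := by
  rw [innerCut, map_cfc π isSelfAdjoint_cutWeight (by fun_prop), map_cutWeight π hδ, innerCut]

lemma star_mul_self_le_smul_cutWeight (hδ : 0 < δ) :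
    star X * X ≤ √(δ + ‖W‖ ^ 2) • cutWeight δ W X := by
  have hone : 1 ≤ √(δ + ‖W‖ ^ 2) • cfc (damp δ) (W * star W) := by
    rw [← cfc_smul _ _ _ (continuous_damp hδ).continuousOn]
    have hcont := continuous_damp hδ
    refine one_le_cfc _ _ (fun t ht => ?_) (by fun_prop)
    have ht0 : |t| ≤ ‖W‖ ^ 2 := by
      have := spectrum.norm_le_norm_mul_of_mem ht
      rw [CStarRing.norm_self_mul_star, ← sq] at this
      exact this.trans (mul_le_of_le_one_right (by positivity) norm_one_le_one)
    rw [smul_eq_mul, damp, ← div_eq_mul_inv, one_le_div (by positivity)]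
    gcongr
  have hconj := star_left_conjugate_le_conjugate hone X
  rwa [mul_one, mul_smul_comm, smul_mul_assoc] at hconj

lemma norm_mul_one_sub_innerCut_sq_le (hδ : 0 < δ) :
    ‖X * (1 - innerCut δ W X)‖ ^ 2 ≤ 2 * √(δ + ‖W‖ ^ 2) := by
  set M := cutWeight δ W X
  have hMsa : IsSelfAdjoint M := isSelfAdjoint_cutWeight
  set H := cfc (fun t => 1 - ramp (t - 1)) M with hHdef
  have hH : 1 - innerCut δ W X = H := by
    rw [hHdef, cfc_sub _ _ _, cfc_const_one ℝ M, innerCut]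
  have hHsa : IsSelfAdjoint H := cfc_predicate _ _
  have hHMH : ‖H * M * H‖ ≤ 2 := by
    rw [hHdef, cfc_mul_self_mul_cfc hMsa (by fun_prop)]
    refine norm_cfc_le zero_le_two fun t ht => ?_
    have ht0 : 0 ≤ t := spectrum_nonneg_of_nonneg cutWeight_nonneg ht
    obtain ⟨h0, h1⟩ := ramp_mem_Icc (t - 1)
    rw [mul_right_comm, Real.norm_of_nonneg (mul_nonneg (mul_self_nonneg _) ht0)]
    rcases le_total t 2 with h | h
    · exact (mul_le_of_le_one_left ht0 (by nlinarith)).trans h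
    · rw [ramp_of_one_le (by linarith), sub_self, zero_mul, zero_mul]
      exact zero_le_two
  have hle := star_left_conjugate_le_conjugate
    (star_mul_self_le_smul_cutWeight (W := W) (X := X) hδ) H
  rw [hH, sq, ← CStarRing.norm_star_mul_self]
  calc ‖star (X * H) * (X * H)‖ = ‖star H * (star X * X) * H‖ := by
        simp only [star_mul, mul_assoc]
    _ ≤ ‖star H * (√(δ + ‖W‖ ^ 2) • M) * H‖ := CStarAlgebra.norm_le_norm_of_nonneg_of_le
        (star_left_conjugate_nonneg (star_mul_self_nonneg X) H) hle
    _ = √(δ + ‖W‖ ^ 2) * ‖H * M * H‖ := by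
        rw [hHsa.star_eq, mul_smul_comm, smul_mul_assoc, norm_smul,
          Real.norm_of_nonneg (Real.sqrt_nonneg _)]
    _ ≤ 2 * √(δ + ‖W‖ ^ 2) := by
        rw [mul_comm]
        gcongr

lemma norm_star_mul_damp_mul_le (hδ : 0 < δ) :
    ‖star W * cfc (damp δ) (W * star W) * W‖ ≤ ‖W‖ := by
  set N := cfc (damp δ) (W * star W) with hN
  have hNsa : IsSelfAdjoint N := cfc_predicate _ _
  have hNWN : ‖N * (W * star W) * N‖ ≤ 1 := by
    rw [hN, cfc_mul_self_mul_cfc (.mul_star_self W) (continuous_damp hδ)]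
    refine norm_cfc_le zero_le_one fun t _ => ?_
    rw [mul_right_comm, damp, ← mul_inv, Real.mul_self_sqrt (by positivity), norm_mul, norm_inv,
      Real.norm_of_nonneg (by positivity), Real.norm_eq_abs, inv_mul_le_one₀ (by positivity)]
    exact le_add_of_nonneg_left hδ.le
  refine abs_le_of_sq_le_sq' ?_ (norm_nonneg W) |>.2
  calc ‖star W * N * W‖ ^ 2 = ‖star W * (N * (W * star W) * N) * W‖ := by
        rw [sq, ← CStarRing.norm_star_mul_self]
        simp only [star_mul, star_star, hNsa.star_eq, mul_assoc]
    _ ≤ ‖star W‖ * ‖N * (W * star W) * N‖ * ‖W‖ := norm_mul₃_le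
    _ ≤ ‖W‖ ^ 2 := by
        rw [norm_star, sq]
        gcongr
        exact mul_le_of_le_one_right (norm_nonneg W) hNWN

lemma norm_outerCut_mul_sq_le (hδ : 0 < δ) {V : A} (hV : X * V = W) :
    ‖outerCut δ W X * V‖ ^ 2 ≤ ‖W‖ := by
  have hle : outerCut δ W X * outerCut δ W X ≤ cutWeight δ W X := by
    rw [outerCut, ← cfc_mul _ _ _]
    nth_rw 2 [← cfc_id' ℝ (cutWeight δ W X) isSelfAdjoint_cutWeight]
    refine cfc_mono fun t ht => ?_
    obtain ⟨h0, h1⟩ := ramp_mem_Icc t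
    exact (mul_le_of_le_one_left h0 h1).trans
      (ramp_le_self (spectrum_nonneg_of_nonneg cutWeight_nonneg ht))
  have hff : 0 ≤ outerCut δ W X * outerCut δ W X := isSelfAdjoint_outerCut.mul_self_nonneg
  calc ‖outerCut δ W X * V‖ ^ 2 = ‖star V * (outerCut δ W X * outerCut δ W X) * V‖ := by
        rw [sq, ← CStarRing.norm_star_mul_self, star_mul, isSelfAdjoint_outerCut.star_eq]
        simp only [mul_assoc]
    _ ≤ ‖star V * cutWeight δ W X * V‖ := CStarAlgebra.norm_le_norm_of_nonneg_of_le
        (star_left_conjugate_nonneg hff V) (star_left_conjugate_le_conjugate hle V)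
    _ = ‖star W * cfc (damp δ) (W * star W) * W‖ := by
        simp only [cutWeight, mul_assoc, hV]
        simp only [← mul_assoc, ← star_mul, hV]
    _ ≤ ‖W‖ := norm_star_mul_damp_mul_le hδ

end Cut

section Nilpotent

universe u

variable {A C : Type u} [CStarAlgebra A] [CStarAlgebra C] {X b f g P : A} {δ : ℝ}

lemma pow_add_of_mul_eq_zero {R : Type*} [Semiring R] {y z : R} (hyz : y * z = 0)
    (hzz : z * z = 0) (m : ℕ) : (y + z) ^ (m + 1) = y ^ (m + 1) + z * y ^ m := by
  induction m with
  | zero => simp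
  | succ m ih =>
    rw [pow_succ', ih, add_mul, mul_add, mul_add, ← mul_assoc y z, ← mul_assoc z z, hyz, hzz,
      zero_mul, add_zero, add_zero, ← pow_succ']

lemma norm_pow_le_pow_of_le {R : ℝ} (hX : ‖X‖ ≤ R) (m : ℕ) : ‖X ^ m‖ ≤ R ^ m := by
  induction m with
  | zero => simpa only [pow_zero] using norm_one_le_one
  | succ m ih =>
    rw [pow_succ, pow_succ]
    exact norm_mul_le_of_le ih hX

lemma norm_compress_le {R : ℝ} (hf : ‖f‖ ≤ 1) (hg : ‖g‖ ≤ 1) (hX : ‖X‖ ≤ R) :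
    ‖f * X * g‖ ≤ R := by
  simpa only [one_mul, mul_one] using norm_mul_le_of_le (norm_mul_le_of_le hf hX) hg

lemma norm_compress_pow_sub_le {R : ℝ} (hgf : g * f = g) (hf : ‖f‖ ≤ 1) (hg : ‖g‖ ≤ 1)
    (hX : ‖X‖ ≤ R) (m : ℕ) :
    ‖(f * X * g) ^ (m + 1) - f * X ^ (m + 1)‖ ≤ (m + 1) * R ^ m * ‖X * (1 - g)‖ := by
  have herror (m : ℕ) : ‖f * (X * (1 - g)) * X ^ m‖ ≤ R ^ m * ‖X * (1 - g)‖ := by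
    refine (norm_mul_le_of_le (norm_mul_le_of_le hf le_rfl)
      (norm_pow_le_pow_of_le hX m)).trans_eq ?_
    ring
  induction m with
  | zero =>
    rw [norm_sub_rev]
    simpa [mul_sub, mul_assoc] using herror 0
  | succ m ih =>
    have hsplit : (f * X * g) ^ (m + 2) - f * X ^ (m + 2) =
        f * X * g * ((f * X * g) ^ (m + 1) - f * X ^ (m + 1)) -
          f * (X * (1 - g)) * X ^ (m + 1) := by
      have hcancel : f * X * g * (f * X ^ (m + 1)) = f * X * g * X ^ (m + 1) := by
        rw [← mul_assoc (f * X * g), mul_assoc (f * X), hgf]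
      rw [mul_sub, hcancel, pow_succ' _ (m + 1), pow_succ' X (m + 1)]
      noncomm_ring
    rw [hsplit]
    refine (norm_sub_le_of_le (norm_mul_le_of_le (norm_compress_le hf hg hX) ih)
      (herror (m + 1))).trans_eq ?_
    push_cast
    ring

/-- A linear map of `A`, built from `X`, whose values have nilpotency order `k + 1`. It moves `X`
only slightly when `X ^ (k + 1)` and `δ` are small. The recursion compresses `X` by the cut-offs
`f`, `g` attached to `W = X ^ (k + 2)`: the compression `f X g` has a small power of order `k + 1`,
and `(1 - f) X g` accounts for the rest of `X` up to the small error `X (1 - g)`. -/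
noncomputable def nilpotentMap (δ : ℝ) : ℕ → A → A →L[ℂ] A
  | 0, _ => 0
  | k + 1, X =>
    (nilpotentMap δ k (outerCut δ (X ^ (k + 2)) X * X * innerCut δ (X ^ (k + 2)) X)).comp
        (ContinuousLinearMap.mulLeftRight ℂ A (outerCut δ (X ^ (k + 2)) X)
          (innerCut δ (X ^ (k + 2)) X)) +
      ContinuousLinearMap.mulLeftRight ℂ A (1 - outerCut δ (X ^ (k + 2)) X)
        (innerCut δ (X ^ (k + 2)) X)

lemma nilpotentMap_succ_apply (k : ℕ) (X Z : A) :
    nilpotentMap δ (k + 1) X Z =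
      nilpotentMap δ k (outerCut δ (X ^ (k + 2)) X * X * innerCut δ (X ^ (k + 2)) X)
          (outerCut δ (X ^ (k + 2)) X * Z * innerCut δ (X ^ (k + 2)) X) +
        (1 - outerCut δ (X ^ (k + 2)) X) * Z * innerCut δ (X ^ (k + 2)) X := by
  simp only [nilpotentMap, add_apply, ContinuousLinearMap.comp_apply,
    ContinuousLinearMap.mulLeftRight_apply]

lemma nilpotentMap_mem_quasilocal (k : ℕ) (X : A) : nilpotentMap δ k X ∈ quasilocal A := by
  induction k generalizing X with
  | zero => exact zero_mem _
  | succ k ih =>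
    exact add_mem (mul_mem (ih _) (mulLeftRight_mem_quasilocal _ _))
      (mulLeftRight_mem_quasilocal _ _)

lemma nilpotentMap_mul_eq_zero (k : ℕ) (Z : A) (hb : X * b = 0) :
    nilpotentMap δ k X Z * b = 0 := by
  induction k generalizing X Z with
  | zero => exact zero_mul b
  | succ k ih =>
    have hgb : innerCut δ (X ^ (k + 2)) X * b = 0 := innerCut_mul_eq_zero hb
    rw [nilpotentMap_succ_apply, add_mul, ih _ (by rw [mul_assoc, hgb, mul_zero]),
      mul_assoc _ (innerCut _ _ _), hgb, mul_zero, add_zero]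

lemma nilpotentMap_pow (k : ℕ) (X Z : A) : nilpotentMap δ k X Z ^ (k + 1) = 0 := by
  induction k generalizing X Z with
  | zero => exact pow_one _
  | succ k ih =>
    rw [nilpotentMap_succ_apply]
    set f := outerCut δ (X ^ (k + 2)) X
    set g := innerCut δ (X ^ (k + 2)) X
    have hg : g * (1 - f) = 0 := innerCut_mul_one_sub_outerCut
    have hker : nilpotentMap δ k (f * X * g) (f * Z * g) * (1 - f) = 0 :=
      nilpotentMap_mul_eq_zero k _ (by rw [mul_assoc, hg, mul_zero])
    have hmul : nilpotentMap δ k (f * X * g) (f * Z * g) * ((1 - f) * Z * g) = 0 := by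
      rw [mul_assoc (1 - f), ← mul_assoc, hker, zero_mul]
    have hsq : (1 - f) * Z * g * ((1 - f) * Z * g) = 0 := by
      rw [mul_assoc (1 - f) Z g, ← mul_assoc ((1 - f) * (Z * g)), mul_assoc (1 - f) (Z * g),
        mul_assoc Z, hg, mul_zero, mul_zero, zero_mul]
    rw [pow_add_of_mul_eq_zero hmul hsq, pow_succ, ih, zero_mul, mul_zero, add_zero]

lemma commute_nilpotentMap (k : ℕ) {Z : A} (hX : Commute X P) (hX' : Commute (star X) P)
    (hZ : Commute Z P) : Commute (nilpotentMap δ k X Z) P := by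
  induction k generalizing X Z with
  | zero => exact Commute.zero_left P
  | succ k ih =>
    have hcut : Commute (cutWeight δ (X ^ (k + 2)) X) P :=
      commute_cutWeight hX hX' (hX.pow_left _) (by rw [star_pow]; exact hX'.pow_left _)
    have hf : Commute (outerCut δ (X ^ (k + 2)) X) P := hcut.cfc_real _
    have hg : Commute (innerCut δ (X ^ (k + 2)) X) P := hcut.cfc_real _
    rw [nilpotentMap_succ_apply]
    refine (ih ((hf.mul_left hX).mul_left hg) ?_ ((hf.mul_left hZ).mul_left hg)).add_left
      ((((Commute.one_left P).sub_left hf).mul_left hZ).mul_left hg)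
    rw [star_mul, star_mul, isSelfAdjoint_outerCut.star_eq, isSelfAdjoint_innerCut.star_eq]
    exact hg.mul_left (hX'.mul_left hf)

lemma map_nilpotentMap (π : A →⋆ₐ[ℂ] C) (hδ : 0 < δ) (k : ℕ) (X Z : A) :
    π (nilpotentMap δ k X Z) = nilpotentMap δ k (π X) (π Z) := by
  induction k generalizing X Z with
  | zero => exact map_zero π
  | succ k ih =>
    simp only [nilpotentMap_succ_apply, map_add, map_mul, map_sub, map_one, ih,
      map_outerCut π hδ, map_innerCut π hδ, map_pow]

lemma norm_mul_one_sub_innerCut_le {γ : ℝ} {W : A} (hδ : δ ∈ Set.Ioc 0 γ) (hW : ‖W‖ ≤ γ) :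
    ‖X * (1 - innerCut δ W X)‖ ≤ √(2 * √(γ + γ ^ 2)) := by
  refine Real.le_sqrt_of_sq_le ((norm_mul_one_sub_innerCut_sq_le hδ.1).trans ?_)
  gcongr
  exact hδ.2

lemma norm_compress_pow_le {γ R : ℝ} {k : ℕ} (hδ : δ ∈ Set.Ioc 0 γ) (hX : ‖X‖ ≤ R)
    (hW : ‖X ^ (k + 2)‖ ≤ γ) :
    ‖(outerCut δ (X ^ (k + 2)) X * X * innerCut δ (X ^ (k + 2)) X) ^ (k + 1)‖ ≤
      (k + 1) * R ^ k * √(2 * √(γ + γ ^ 2)) + √γ := by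
  have hR : 0 ≤ R := (norm_nonneg X).trans hX
  have hpow := norm_compress_pow_sub_le
    (innerCut_mul_outerCut (δ := δ) (W := X ^ (k + 2)) (X := X))
    norm_outerCut_le_one norm_innerCut_le_one hX k
  have hcut := norm_mul_one_sub_innerCut_le (X := X) hδ hW
  have houter : ‖outerCut δ (X ^ (k + 2)) X * X ^ (k + 1)‖ ≤ √γ :=
    Real.le_sqrt_of_sq_le ((norm_outerCut_mul_sq_le hδ.1 (pow_succ' X (k + 1)).symm).trans hW)
  rw [← sub_add_cancel (_ ^ (k + 1)) (outerCut δ (X ^ (k + 2)) X * X ^ (k + 1))]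
  refine norm_add_le_of_le (hpow.trans ?_) houter
  gcongr

lemma eventually_norm_nilpotentMap_sub_le (k : ℕ) (R : ℝ) {ε : ℝ} (hε : 0 < ε) :
    ∀ᶠ γ in 𝓝[>] (0 : ℝ), ∀ (A : Type u) [CStarAlgebra A] (X : A), ‖X‖ ≤ R →
      ‖X ^ (k + 1)‖ ≤ γ → ∀ δ ∈ Set.Ioc 0 γ, ‖nilpotentMap δ k X X - X‖ ≤ ε := by
  induction k generalizing ε with
  | zero =>
    filter_upwards [Ioc_mem_nhdsGT hε] with γ hγ A _ X _ hX δ _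
    simpa [nilpotentMap] using hX.trans hγ.2
  | succ k ih =>
    obtain ⟨γ₀, hγ₀, hclose⟩ := (eventually_mem_nhdsWithin.and (ih (half_pos hε))).exists
    have hcut : Tendsto (fun γ : ℝ => √(2 * √(γ + γ ^ 2))) (𝓝[>] 0) (𝓝 0) := by
      have : Continuous fun γ : ℝ => √(2 * √(γ + γ ^ 2)) := by fun_prop
      simpa using (this.tendsto 0).mono_left nhdsWithin_le_nhds
    have hpow : Tendsto (fun γ : ℝ => (k + 1) * R ^ k * √(2 * √(γ + γ ^ 2)) + √γ)
        (𝓝[>] 0) (𝓝 0) := by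
      simpa using (hcut.const_mul ((k + 1) * R ^ k)).add
        ((Real.continuous_sqrt.tendsto 0).mono_left nhdsWithin_le_nhds)
    filter_upwards [hcut.eventually_le_const (half_pos hε), hpow.eventually_le_const hγ₀,
      Ioc_mem_nhdsGT hγ₀] with γ hγcut hγpow hγ A _ X hXR hX δ hδ
    have hsmall := hclose A _ (norm_compress_le norm_outerCut_le_one norm_innerCut_le_one hXR)
      ((norm_compress_pow_le hδ hXR hX).trans hγpow) δ ⟨hδ.1, hδ.2.trans hγ.2⟩
    have herror := (norm_mul_one_sub_innerCut_le (X := X) hδ hX).trans hγcut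
    rw [nilpotentMap_succ_apply, ← add_halves ε]
    refine (congrArg norm ?_).trans_le (norm_sub_le_of_le hsmall herror)
    noncomm_ring

end Nilpotent

section Triangular

universe u

/-- A family of mutually orthogonal self-adjoint projections. -/
structure OrthogonalProjections {ι A : Type*} [Semiring A] [Star A] (P : ι → A) : Prop extends
    OrthogonalIdempotents P where
  isSelfAdjoint (i : ι) : IsSelfAdjoint (P i)

variable {ι : Type*} {A C : Type u} [CStarAlgebra A] [CStarAlgebra C] {P : ι → A}

namespace OrthogonalProjections

lemma isStarProjection (hP : OrthogonalProjections P) (i : ι) : IsStarProjection (P i) :=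
  ⟨hP.idem i, hP.isSelfAdjoint i⟩

lemma map (hP : OrthogonalProjections P) (π : A →⋆ₐ[ℂ] C) :
    OrthogonalProjections fun i => π (P i) :=
  ⟨hP.toOrthogonalIdempotents.map (π : A →+* C), fun i => (hP.isSelfAdjoint i).map π⟩

lemma comp {κ : Type*} (hP : OrthogonalProjections P) (e : κ ↪ ι) :
    OrthogonalProjections fun i => P (e i) :=
  ⟨hP.toOrthogonalIdempotents.embedding e, fun i => hP.isSelfAdjoint (e i)⟩

lemma isStarProjection_sum (hP : OrthogonalProjections P) (s : Finset ι) :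
    IsStarProjection (∑ i ∈ s, P i) :=
  ⟨hP.isIdempotentElem_sum, isSelfAdjoint_sum s fun i _ => hP.isSelfAdjoint i⟩

lemma norm_corner_le (hP : OrthogonalProjections P) (i j : ι) (Z : A) : ‖P i * Z * P j‖ ≤ ‖Z‖ :=
  norm_compress_le (hP.isStarProjection i).norm_le (hP.isStarProjection j).norm_le le_rfl

lemma norm_sum_corner_le (hP : OrthogonalProjections P) (s : Finset ι) {V : ι → A} {d : ℝ}
    (hd : 0 ≤ d) (hV : ∀ i ∈ s, ‖V i‖ ≤ d) : ‖∑ i ∈ s, P i * V i * P i‖ ≤ d := by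
  classical
  induction s using Finset.induction_on with
  | empty => simpa only [Finset.sum_empty, norm_zero]
  | insert a s ha ih =>
    have hone_sub : ∀ i ∈ s, (1 - P a) * (P i * V i * P i) * (1 - P a) = P i * V i * P i := by
      intro i hi
      have hne : a ≠ i := fun h => ha (h ▸ hi)
      have hai : (1 - P a) * P i = P i := by rw [sub_mul, one_mul, hP.ortho hne, sub_zero]
      have hia : P i * (1 - P a) = P i := by rw [mul_sub, mul_one, hP.ortho hne.symm, sub_zero]
      rw [← mul_assoc, ← mul_assoc, hai, mul_assoc, hia]
    rw [Finset.sum_insert ha, ← Finset.sum_congr rfl hone_sub, ← Finset.sum_mul, ← Finset.mul_sum]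
    exact norm_conj_add_conj_one_sub_le (hP.isStarProjection a) (hV a (Finset.mem_insert_self a s))
      (ih fun i hi => hV i (Finset.mem_insert_of_mem hi))

lemma commute_corner (hP : OrthogonalProjections P) (Z : A) (i : ι) :
    Commute (P i * Z * P i) (P i) := by
  rw [Commute, SemiconjBy, mul_assoc, (hP.idem i).eq, ← mul_assoc, ← mul_assoc, (hP.idem i).eq]

end OrthogonalProjections

variable [Fintype ι] [LinearOrder ι]

/-- `Z` is block upper triangular with respect to the projections `P i`; the `P i` need not add up
to `1`, but `Z` has to vanish off their sum. -/
structure IsUpperTriangular (P : ι → A) (Z : A) : Prop where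
  sum_corner : ∑ i, ∑ j, P i * Z * P j = Z
  corner_eq_zero ⦃i j : ι⦄ : j < i → P i * Z * P j = 0

/-- `Z` is block upper triangular and its `i`-th diagonal block has nilpotency order `k i + 1`. -/
structure IsNilTriangular (P : ι → A) (k : ι → ℕ) (Z : A) : Prop extends
    IsUpperTriangular P Z where
  corner_pow (i : ι) : (P i * Z * P i) ^ (k i + 1) = 0

/-- The truncation of `Z` to its upper triangular part, with `Ψ i` applied to the `i`-th diagonal
block. -/
noncomputable def triangularMap (P : ι → A) (Ψ : ι → A →L[ℂ] A) : A →L[ℂ] A :=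
  ∑ i, ∑ j, (ContinuousLinearMap.mulLeftRight ℂ A (P i) (P j)).comp
    ((if i = j then Ψ i else if i < j then 1 else 0).comp
      (ContinuousLinearMap.mulLeftRight ℂ A (P i) (P j)))

variable {Ψ : ι → A →L[ℂ] A} {Z : A} {k : ι → ℕ}

lemma triangularMap_apply : triangularMap P Ψ Z =
    ∑ i, ∑ j, P i * (if i = j then Ψ i else if i < j then 1 else 0) (P i * Z * P j) * P j := by
  simp only [triangularMap, sum_apply, ContinuousLinearMap.comp_apply,
    ContinuousLinearMap.mulLeftRight_apply]

lemma triangularMap_mem_quasilocal (hΨ : ∀ i, Ψ i ∈ quasilocal A) :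
    triangularMap P Ψ ∈ quasilocal A := by
  refine sum_mem fun i _ => sum_mem fun j _ => mul_mem (mulLeftRight_mem_quasilocal _ _)
    (mul_mem ?_ (mulLeftRight_mem_quasilocal _ _))
  split_ifs
  exacts [hΨ i, one_mem _, zero_mem _]

lemma map_triangularMap (π : A →⋆ₐ[ℂ] C) {Ψ' : ι → C →L[ℂ] C}
    (hΨ : ∀ i Z, π (Ψ i Z) = Ψ' i (π Z)) :
    π (triangularMap P Ψ Z) = triangularMap (fun i => π (P i)) Ψ' (π Z) := by
  simp only [triangularMap_apply, map_sum, map_mul]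
  refine Finset.sum_congr rfl fun i _ => Finset.sum_congr rfl fun j _ => ?_
  split_ifs <;> simp [hΨ]

lemma corner_triangularMap (hP : OrthogonalProjections P) (i j : ι) :
    P i * triangularMap P Ψ Z * P j =
      P i * (if i = j then Ψ i else if i < j then 1 else 0) (P i * Z * P j) * P j := by
  have hcorner (a b : ι) (V : A) : P i * (P a * V * P b) * P j =
      if i = a then if b = j then P i * V * P j else 0 else 0 := by
    rw [← mul_assoc, ← mul_assoc, mul_assoc, hP.mul_eq, hP.mul_eq]
    split_ifs with ha hb <;> simp [*]
  simp only [triangularMap_apply, Finset.mul_sum, Finset.sum_mul, hcorner,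
    Finset.sum_ite_irrel, Finset.sum_const_zero, Finset.sum_ite_eq, Finset.sum_ite_eq',
    Finset.mem_univ, if_true]

lemma isUpperTriangular_triangularMap (hP : OrthogonalProjections P) :
    IsUpperTriangular P (triangularMap P Ψ Z) where
  sum_corner := by
    simp only [corner_triangularMap hP]
    exact triangularMap_apply.symm
  corner_eq_zero i j hij := by
    rw [corner_triangularMap hP, if_neg hij.ne', if_neg hij.not_gt]
    simp

lemma isNilTriangular_triangularMap (hP : OrthogonalProjections P)
    (hΨ : ∀ i Z, Ψ i Z ^ (k i + 1) = 0) (hcomm : ∀ i Z, Commute Z (P i) → Commute (Ψ i Z) (P i)) :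
    IsNilTriangular P k (triangularMap P Ψ Z) where
  toIsUpperTriangular := isUpperTriangular_triangularMap hP
  corner_pow i := by
    have hcommΨ := hcomm i _ (hP.commute_corner Z i)
    rw [corner_triangularMap hP, if_pos rfl, ← hcommΨ.eq, mul_assoc, (hP.idem i).eq,
      hcommΨ.mul_pow, hΨ, zero_mul]

lemma IsUpperTriangular.add {W : A} (hZ : IsUpperTriangular P Z) (hW : IsUpperTriangular P W) :
    IsUpperTriangular P (Z + W) where
  sum_corner := by
    simp only [mul_add, add_mul, Finset.sum_add_distrib, hZ.sum_corner, hW.sum_corner]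
  corner_eq_zero i j hij := by
    rw [mul_add, add_mul, hZ.corner_eq_zero hij, hW.corner_eq_zero hij, add_zero]

lemma IsUpperTriangular.triangularMap_sub (hP : OrthogonalProjections P)
    (hZ : IsUpperTriangular P Z) :
    triangularMap P Ψ Z - Z = ∑ i, P i * (Ψ i (P i * Z * P i) - P i * Z * P i) * P i := by
  have hcorner (i j : ι) : P i * (P i * Z * P j) * P j = P i * Z * P j := by
    rw [← mul_assoc, ← mul_assoc, (hP.idem i).eq, mul_assoc, (hP.idem j).eq]
  nth_rw 2 [← hZ.sum_corner]
  simp only [triangularMap_apply, ← Finset.sum_sub_distrib]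
  refine Finset.sum_congr rfl fun i _ => ?_
  rw [Finset.sum_eq_single_of_mem i (Finset.mem_univ i), if_pos rfl, mul_sub, sub_mul, hcorner]
  intro j _ hji
  rcases hji.lt_or_gt with hlt | hgt
  · simp [hji.symm, hlt.not_gt, hZ.corner_eq_zero hlt]
  · simp [hji.symm, hgt, hcorner]

lemma isClosed_setOf_isNilTriangular (P : ι → A) (k : ι → ℕ) :
    IsClosed {Z | IsNilTriangular P k Z} := by
  have hset : {Z | IsNilTriangular P k Z} = {Z | ∑ i, ∑ j, P i * Z * P j = Z} ∩
      ((⋂ i, ⋂ j, ⋂ _ : j < i, {Z | P i * Z * P j = 0}) ∩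
        ⋂ i, {Z | (P i * Z * P i) ^ (k i + 1) = 0}) := by
    ext Z
    simp only [Set.mem_inter_iff, Set.mem_iInter]
    exact ⟨fun h => ⟨h.sum_corner, fun _ _ hij => h.corner_eq_zero hij, h.corner_pow⟩,
      fun h => ⟨⟨h.1, fun _ _ hij => h.2.1 _ _ hij⟩, h.2.2⟩⟩
  rw [hset]
  refine (isClosed_eq (by fun_prop) continuous_id).inter
    ((isClosed_iInter fun i => isClosed_iInter fun j => isClosed_iInter fun _ => ?_).inter
      (isClosed_iInter fun i => ?_))
  all_goals exact isClosed_eq (by fun_prop) continuous_const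

lemma IsNilTriangular.smul (hZ : IsNilTriangular P k Z) (c : ℂ) :
    IsNilTriangular P k (c • Z) where
  sum_corner := by
    simp only [mul_smul_comm, smul_mul_assoc, ← Finset.smul_sum, hZ.sum_corner]
  corner_eq_zero i j hij := by
    rw [mul_smul_comm, smul_mul_assoc, hZ.corner_eq_zero hij, smul_zero]
  corner_pow i := by
    rw [mul_smul_comm, smul_mul_assoc, smul_pow, hZ.corner_pow, smul_zero]

/-- The map `triangularMap` that replaces the diagonal blocks of `Z` by nilpotent ones, by means of
the maps `nilpotentMap` attached to these blocks. -/
noncomputable def nilTriangularMap (δ : ℝ) (P : ι → A) (k : ι → ℕ) (Z : A) : A →L[ℂ] A :=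
  triangularMap P fun i => nilpotentMap δ (k i) (P i * Z * P i)

variable {δ : ℝ}

lemma nilTriangularMap_mem_quasilocal : nilTriangularMap δ P k Z ∈ quasilocal A :=
  triangularMap_mem_quasilocal fun _ => nilpotentMap_mem_quasilocal _ _

lemma isNilTriangular_nilTriangularMap (hP : OrthogonalProjections P) (W : A) :
    IsNilTriangular P k (nilTriangularMap δ P k Z W) := by
  refine isNilTriangular_triangularMap hP (fun _ => nilpotentMap_pow _ _) fun i V hV => ?_
  refine commute_nilpotentMap _ (hP.commute_corner Z i) ?_ hV
  simpa only [star_mul, (hP.isSelfAdjoint i).star_eq, mul_assoc] using hP.commute_corner (star Z) i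

lemma map_nilTriangularMap (π : A →⋆ₐ[ℂ] C) (hδ : 0 < δ) (W : A) :
    π (nilTriangularMap δ P k Z W) =
      nilTriangularMap δ (fun i => π (P i)) k (π Z) (π W) := by
  refine map_triangularMap π fun i V => ?_
  rw [map_nilpotentMap π hδ, map_mul, map_mul]

lemma eventually_norm_nilTriangularMap_sub_le (k : ι → ℕ) (R : ℝ) {ε : ℝ} (hε : 0 < ε) :
    ∀ᶠ γ in 𝓝[>] (0 : ℝ), ∀ (A : Type u) [CStarAlgebra A] (P : ι → A) (Z : A),
      OrthogonalProjections P → IsUpperTriangular P Z → ‖Z‖ ≤ R →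
      (∀ i, ‖(P i * Z * P i) ^ (k i + 1)‖ ≤ γ) → ∀ δ ∈ Set.Ioc 0 γ,
        ‖nilTriangularMap δ P k Z Z - Z‖ ≤ ε := by
  filter_upwards [eventually_all.2 fun i => eventually_norm_nilpotentMap_sub_le (k i) R hε]
    with γ hγ A _ P Z hP hZ hR hpow δ hδ
  rw [nilTriangularMap, hZ.triangularMap_sub hP]
  exact hP.norm_sum_corner_le _ hε.le fun i _ =>
    hγ i A _ ((hP.norm_corner_le i i Z).trans hR) (hpow i) δ hδ

end Triangular

section Lifting

universe u

lemma exists_map_eq_of_forall_exists_dist_le {X Y : Type*} [PseudoMetricSpace X] [CompleteSpace X]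
    [MetricSpace Y] {S : Set X} (hS : IsClosed S) {f : X → Y} (hf : Continuous f) {y : Y}
    {γ : ℕ → ℝ} (hγ : ∀ n, 0 < γ n)
    (h : ∀ n, ∀ a ∈ S, dist (f a) y < γ n → ∀ ε > 0,
      ∃ b ∈ S, dist (f b) y < ε ∧ dist a b ≤ (1 / 2) ^ n)
    {a : X} (ha : a ∈ S) (hay : dist (f a) y < γ 0) : ∃ b ∈ S, f b = y := by
  have hnext (n : ℕ) (a : X) (ha : a ∈ S) (hay : dist (f a) y < γ n) :=
    h n a ha hay (min (γ (n + 1)) ((1 / 2) ^ n)) (lt_min (hγ _) (by positivity))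
  have : Nonempty X := ⟨a⟩
  choose! next hnextS hnextf hdist using hnext
  let u : ℕ → X := fun n => n.rec a next
  have hu (n : ℕ) : u n ∈ S ∧ dist (f (u n)) y < γ n := by
    induction n with
    | zero => exact ⟨ha, hay⟩
    | succ n ih =>
      exact ⟨hnextS n _ ih.1 ih.2, (hnextf n _ ih.1 ih.2).trans_le (min_le_left _ _)⟩
  have hcauchy : CauchySeq u := cauchySeq_of_le_geometric (1 / 2) 1 (by norm_num) fun n => by
    rw [one_mul]
    exact hdist n _ (hu n).1 (hu n).2
  obtain ⟨b, hb⟩ := cauchySeq_tendsto_of_complete hcauchy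
  refine ⟨b, hS.mem_of_tendsto hb (.of_forall fun n => (hu n).1),
    tendsto_nhds_unique (((hf.tendsto b).comp hb).comp (tendsto_add_atTop_nat 1)) ?_⟩
  refine tendsto_iff_dist_tendsto_zero.2 (squeeze_zero (fun _ => dist_nonneg)
    (fun n => ((hnextf n _ (hu n).1 (hu n).2).trans_le (min_le_right _ _)).le)
    (tendsto_pow_atTop_nhds_zero_of_lt_one (by norm_num) (by norm_num)))

variable {A C : Type u} [CStarAlgebra A] [CStarAlgebra C]

lemma norm_pow_sub_pow_le {a b : A} {R : ℝ} (ha : ‖a‖ ≤ R) (hb : ‖b‖ ≤ R) (m : ℕ) :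
    ‖a ^ (m + 1) - b ^ (m + 1)‖ ≤ (m + 1) * R ^ m * ‖a - b‖ := by
  induction m with
  | zero => simp
  | succ m ih =>
    have hR : 0 ≤ R := (norm_nonneg a).trans ha
    have hsplit : a ^ (m + 1 + 1) - b ^ (m + 1 + 1) =
        a * (a ^ (m + 1) - b ^ (m + 1)) + (a - b) * b ^ (m + 1) := by
      rw [pow_succ' a, pow_succ' b (m + 1)]
      noncomm_ring
    calc ‖a ^ (m + 1 + 1) - b ^ (m + 1 + 1)‖
        ≤ ‖a‖ * ‖a ^ (m + 1) - b ^ (m + 1)‖ + ‖a - b‖ * ‖b ^ (m + 1)‖ := by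
          rw [hsplit]
          exact (norm_add_le _ _).trans (add_le_add (norm_mul_le _ _) (norm_mul_le _ _))
      _ ≤ R * ((m + 1) * R ^ m * ‖a - b‖) + ‖a - b‖ * R ^ (m + 1) := by
          gcongr
          exact norm_pow_le_pow_of_le hb _
      _ = ((m + 1 : ℕ) + 1) * R ^ (m + 1) * ‖a - b‖ := by
          push_cast
          ring

variable {ι : Type*} [Fintype ι] [LinearOrder ι] {P : ι → A} {k : ι → ℕ}

lemma IsUpperTriangular.map {Z : A} (hZ : IsUpperTriangular P Z) (π : A →⋆ₐ[ℂ] C) :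
    IsUpperTriangular (fun i => π (P i)) (π Z) where
  sum_corner := by simp only [← map_mul, ← map_sum, hZ.sum_corner]
  corner_eq_zero i j hij := by simp only [← map_mul, hZ.corner_eq_zero hij, map_zero]

lemma IsUpperTriangular.triangularMap_one {Z : A} (hZ : IsUpperTriangular P Z)
    (hP : OrthogonalProjections P) : triangularMap P 1 Z = Z := by
  rw [← sub_eq_zero, hZ.triangularMap_sub hP]
  simp

lemma exists_isUpperTriangular_map_eq {π : A →⋆ₐ[ℂ] C} (hπ : Function.Surjective π)
    (hP : OrthogonalProjections P) {Z : A} (hZ : IsUpperTriangular P Z) {z : C}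
    (hz : IsUpperTriangular (fun i => π (P i)) z) {r : ℝ} (hr : ‖π Z - z‖ < r) :
    ∃ V, IsUpperTriangular P V ∧ π V = z ∧ ‖V - Z‖ ≤ ‖triangularMap P 1‖ * r := by
  obtain ⟨w, hw, hwr⟩ := exists_norm_lt_of_surjective hπ (norm_sub_rev z (π Z) ▸ hr)
  refine ⟨Z + triangularMap P 1 w, hZ.add (isUpperTriangular_triangularMap hP), ?_, ?_⟩
  · rw [map_add, map_triangularMap (Ψ' := 1) π fun _ _ => rfl, hw, map_sub,
      hz.triangularMap_one (hP.map π), (hZ.map π).triangularMap_one (hP.map π), add_sub_cancel]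
  · rw [add_sub_cancel_left]
    exact ContinuousLinearMap.le_opNorm_of_le _ hwr.le

lemma IsNilTriangular.norm_corner_pow_le {Z V : A} (hZ : IsNilTriangular P k Z)
    (hP : OrthogonalProjections P) {R : ℝ} (hZR : ‖Z‖ ≤ R) (hVR : ‖V‖ ≤ R) (i : ι) :
    ‖(P i * V * P i) ^ (k i + 1)‖ ≤ (k i + 1) * R ^ k i * ‖V - Z‖ := by
  have hR : 0 ≤ R := (norm_nonneg Z).trans hZR
  calc ‖(P i * V * P i) ^ (k i + 1)‖
      = ‖(P i * V * P i) ^ (k i + 1) - (P i * Z * P i) ^ (k i + 1)‖ := by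
        rw [hZ.corner_pow, sub_zero]
    _ ≤ (k i + 1) * R ^ k i * ‖P i * V * P i - P i * Z * P i‖ :=
        norm_pow_sub_pow_le ((hP.norm_corner_le i i V).trans hVR)
          ((hP.norm_corner_le i i Z).trans hZR) _
    _ ≤ (k i + 1) * R ^ k i * ‖V - Z‖ := by
        rw [← sub_mul, ← mul_sub]
        gcongr
        exact hP.norm_corner_le i i _

/- The diagonal blocks of an upper triangular lift of `z` near `Z` are only nearly nilpotent. How
far the nilpotent approximation in `A` moves them depends on `γ` alone, whereas it moves the blocks
of `z` as little as desired, because these are exactly nilpotent. -/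
lemma eventually_exists_quasilocal_near {π : A →⋆ₐ[ℂ] C} (hπ : Function.Surjective π)
    (hP : OrthogonalProjections P) (k : ι → ℕ) (R : ℝ) {ω : ℝ} (hω : 0 < ω) :
    ∀ᶠ γ in 𝓝[>] (0 : ℝ), ∀ Z, IsNilTriangular P k Z → ‖Z‖ ≤ R →
      ∀ z, IsNilTriangular (fun i => π (P i)) k z → ‖z‖ ≤ R → ‖π Z - z‖ < γ → ∀ η > 0,
        ∃ Φ ∈ quasilocal A, (∀ W, IsNilTriangular P k (Φ W)) ∧
          ∃ V, ‖Φ V - Z‖ ≤ ω ∧ ‖π (Φ V) - z‖ ≤ η := by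
  obtain ⟨γ₁, hnear, hγ₁⟩ := ((eventually_norm_nilTriangularMap_sub_le.{u} k (R + 1)
    (half_pos hω)).and self_mem_nhdsWithin).exists
  have hsmall (c : ℝ) {ε : ℝ} (hε : 0 < ε) : ∀ᶠ γ in 𝓝[>] (0 : ℝ), c * γ ≤ ε := by
    have hlim : Tendsto (fun γ : ℝ => c * γ) (𝓝 0) (𝓝 0) :=
      (continuous_const_mul c).tendsto' 0 0 (mul_zero c)
    exact ((hlim.mono_left nhdsWithin_le_nhds).eventually_lt_const hε).mono fun _ h => h.le
  filter_upwards [hsmall ‖triangularMap P 1‖ zero_lt_one, hsmall ‖triangularMap P 1‖ (half_pos hω),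
    eventually_all.2 fun i => hsmall ((k i + 1) * (R + 1) ^ k i * ‖triangularMap P 1‖) hγ₁]
    with γ hγone hγω hγpow Z hZ hZR z hz hzR hZz η hη
  obtain ⟨V, hV, rfl, hVZ⟩ :=
    exists_isUpperTriangular_map_eq hπ hP hZ.toIsUpperTriangular hz.toIsUpperTriangular hZz
  obtain ⟨γ₂, hnear', hγ₂⟩ := ((eventually_norm_nilTriangularMap_sub_le.{u} k R
    hη).and self_mem_nhdsWithin).exists
  have hδ : 0 < min γ₁ γ₂ := lt_min hγ₁ hγ₂
  have hR : 0 ≤ R := (norm_nonneg Z).trans hZR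
  have hVR : ‖V‖ ≤ R + 1 := by linarith [norm_le_norm_add_norm_sub' V Z]
  refine ⟨nilTriangularMap (min γ₁ γ₂) P k V, nilTriangularMap_mem_quasilocal,
    isNilTriangular_nilTriangularMap hP, V, ?_, ?_⟩
  · have hpow (i : ι) : ‖(P i * V * P i) ^ (k i + 1)‖ ≤ γ₁ :=
      calc ‖(P i * V * P i) ^ (k i + 1)‖ ≤ (k i + 1) * (R + 1) ^ k i * ‖V - Z‖ :=
            hZ.norm_corner_pow_le hP (by linarith) hVR i
        _ ≤ (k i + 1) * (R + 1) ^ k i * ‖triangularMap P 1‖ * γ := by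
            rw [mul_assoc _ _ γ]
            gcongr
        _ ≤ γ₁ := hγpow i
    have hΦV := hnear A P V hP hV hVR hpow _ ⟨hδ, min_le_left _ _⟩
    linarith [norm_sub_le_norm_sub_add_norm_sub (nilTriangularMap (min γ₁ γ₂) P k V V) V Z]
  · rw [map_nilTriangularMap π hδ]
    exact hnear' C _ _ (hP.map π) hz.toIsUpperTriangular hzR
      (fun i => by simpa only [hz.corner_pow, norm_zero] using hγ₂.le) _ ⟨hδ, min_le_right _ _⟩

variable {D : A} {d : ℝ}

lemma norm_le_two_of_norm_add_le_one {V : A} (hd : d < 1) (hD : ‖D‖ ≤ d) (hV : ‖D + V‖ ≤ 1) :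
    ‖V‖ ≤ 2 :=
  (norm_le_add_one_of_norm_add_le hd hD hV).trans_eq one_add_one_eq_two

lemma exists_forall_exists_isNilTriangular_closer {π : A →⋆ₐ[ℂ] C} (hπ : Function.Surjective π)
    (hP : OrthogonalProjections P) (k : ι → ℕ) (hd : d < 1) (hD : ‖D‖ ≤ d) {ε : ℝ} (hε : 0 < ε) :
    ∃ γ > 0, ∀ Z, IsNilTriangular P k Z → ‖D + Z‖ ≤ 1 →
      ∀ z, IsNilTriangular (fun i => π (P i)) k z → ‖π D + z‖ ≤ 1 → ‖π Z - z‖ < γ → ∀ ε' > 0,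
        ∃ Z', IsNilTriangular P k Z' ∧ ‖D + Z'‖ ≤ 1 ∧ ‖π Z' - z‖ < ε' ∧ ‖Z - Z'‖ ≤ ε := by
  set c : ℝ := 9 / (1 - d) with hc
  have hc9 : 9 ≤ c := by
    rw [hc, le_div_iff₀ (by linarith)]
    linarith [(norm_nonneg D).trans hD]
  have hπD : ‖π D‖ ≤ d := (NonUnitalStarAlgHom.norm_apply_le π D).trans hD
  set ω : ℝ := min 1 (ε / (4 * c))
  have hω0 : 0 < ω := by positivity
  have hcω : c * ω ≤ ε / 4 := by
    calc c * ω ≤ c * (ε / (4 * c)) := by gcongr; exact min_le_right _ _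
      _ = ε / 4 := by field_simp
  obtain ⟨γ, hγ, hγ0⟩ := ((eventually_exists_quasilocal_near hπ hP k 2 hω0).and
    self_mem_nhdsWithin).exists
  refine ⟨γ, hγ0, fun Z hZ hDZ z hz hDz hZz ε' hε' => ?_⟩
  set η : ℝ := min 1 (min ε ε' / (4 * c))
  have hη0 : 0 < η := by positivity
  have hcη : c * η ≤ min ε ε' / 4 := by
    calc c * η ≤ c * (min ε ε' / (4 * c)) := by gcongr; exact min_le_right _ _
      _ = min ε ε' / 4 := by field_simp
  obtain ⟨Φ, hΦ, hnil, V, hΦV, hπΦV⟩ := hγ Z hZ (norm_le_two_of_norm_add_le_one hd hD hDZ) z hz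
    (norm_le_two_of_norm_add_le_one hd hπD hDz) hZz (η / 2) (half_pos hη0)
  have hnorm : ‖D + Φ V‖ ≤ 1 + ω := by
    rw [show D + Φ V = D + Z + (Φ V - Z) by abel]
    exact (norm_add_le _ _).trans (add_le_add hDZ hΦV)
  have hnormπ : ‖π (D + Φ V)‖ < 1 + η := by
    rw [show π (D + Φ V) = π D + z + (π (Φ V) - z) by rw [map_add]; abel]
    linarith [norm_add_le (π D + z) (π (Φ V) - z)]
  obtain ⟨V', hV', hdist, hdistπ⟩ := exists_norm_add_map_le_one hπ hΦ hd hD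
    ⟨hω0.le, min_le_left _ _⟩ ⟨hη0, min_le_left _ _⟩ hnorm hnormπ
  rw [← hc] at hdist hdistπ
  rw [map_sub] at hdistπ
  have hminε : min ε ε' ≤ ε := min_le_left _ _
  have hminε' : min ε ε' ≤ ε' := min_le_right _ _
  refine ⟨Φ V', hnil V', hV', ?_, ?_⟩
  · nlinarith [norm_sub_le_norm_sub_add_norm_sub (π (Φ V')) (π (Φ V)) z]
  · rw [norm_sub_rev]
    nlinarith [norm_sub_le_norm_sub_add_norm_sub (Φ V') (Φ V) Z]

lemma exists_isNilTriangular_map_eq_of_near {π : A →⋆ₐ[ℂ] C} (hπ : Function.Surjective π)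
    (hP : OrthogonalProjections P) (k : ι → ℕ) (hd : d < 1) (hD : ‖D‖ ≤ d) :
    ∃ γ > 0, ∀ Z, IsNilTriangular P k Z → ‖D + Z‖ ≤ 1 →
      ∀ z, IsNilTriangular (fun i => π (P i)) k z → ‖π D + z‖ ≤ 1 → ‖π Z - z‖ < γ →
        ∃ Z', IsNilTriangular P k Z' ∧ ‖D + Z'‖ ≤ 1 ∧ π Z' = z := by
  choose γ hγ hstep using fun n : ℕ => exists_forall_exists_isNilTriangular_closer hπ hP k hd hD
    (ε := (1 / 2) ^ n) (by positivity)
  refine ⟨γ 0, hγ 0, fun Z hZ hDZ z hz hDz hZz => ?_⟩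
  have hS : IsClosed {Z | IsNilTriangular P k Z ∧ ‖D + Z‖ ≤ 1} :=
    (isClosed_setOf_isNilTriangular P k).inter
      (isClosed_le (continuous_const.add continuous_id).norm continuous_const)
  have hcloser (n : ℕ) (V : A) (hV : IsNilTriangular P k V ∧ ‖D + V‖ ≤ 1)
      (hVz : dist (π V) z < γ n) (ε : ℝ) (hε : ε > 0) :
      ∃ V', (IsNilTriangular P k V' ∧ ‖D + V'‖ ≤ 1) ∧ dist (π V') z < ε ∧
        dist V V' ≤ (1 / 2) ^ n := by
    rw [dist_eq_norm] at hVz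
    simpa only [and_assoc, dist_eq_norm] using hstep n V hV.1 hV.2 z hz hDz hVz ε hε
  rw [← dist_eq_norm] at hZz
  obtain ⟨Z', hZ', hπZ'⟩ := exists_map_eq_of_forall_exists_dist_le hS (map_continuous π) hγ
    hcloser ⟨hZ, hDZ⟩ hZz
  exact ⟨Z', hZ'.1, hZ'.2, hπZ'⟩

lemma norm_add_ofReal_smul_le_one {y w : A} (hy : ‖y‖ ≤ 1) (hyw : ‖y + w‖ ≤ 1) {t : ℝ}
    (ht : t ∈ Set.Icc (0 : ℝ) 1) : ‖y + (t : ℂ) • w‖ ≤ 1 := by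
  rw [← mem_closedBall_zero_iff, Complex.coe_smul]
  exact (convex_closedBall (0 : A) 1).add_smul_mem (mem_closedBall_zero_iff.2 hy)
    (mem_closedBall_zero_iff.2 hyw) ht

/- Transport the lift `0` of `0` along the segment from `0` to `z`, in steps so short that each
endpoint lifts near the previous lift. -/
theorem exists_isNilTriangular_map_eq {π : A →⋆ₐ[ℂ] C} (hπ : Function.Surjective π)
    (hP : OrthogonalProjections P) (hd : d < 1) (hD : ‖D‖ ≤ d) {z : C}
    (hz : IsNilTriangular (fun i => π (P i)) k z) (hDz : ‖π D + z‖ ≤ 1) :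
    ∃ Z, IsNilTriangular P k Z ∧ ‖D + Z‖ ≤ 1 ∧ π Z = z := by
  obtain ⟨γ, hγ, hnear⟩ := exists_isNilTriangular_map_eq_of_near hπ hP k hd hD
  have hπD : ‖π D‖ ≤ d := (NonUnitalStarAlgHom.norm_apply_le π D).trans hD
  have hz2 : ‖z‖ ≤ 2 := norm_le_two_of_norm_add_le_one hd hπD hDz
  obtain ⟨M, hM⟩ := exists_nat_gt (2 / γ)
  have hM0 : (0 : ℝ) < M := (by positivity : 0 ≤ 2 / γ).trans_lt hM
  have hlift (n : ℕ) (hn : n ≤ M) :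
      ∃ Z, IsNilTriangular P k Z ∧ ‖D + Z‖ ≤ 1 ∧ π Z = ((n / M : ℝ) : ℂ) • z := by
    induction n with
    | zero =>
      refine ⟨0, ⟨⟨by simp, by simp⟩, by simp⟩, ?_, by simp⟩
      rw [add_zero]
      exact hD.trans hd.le
    | succ n ih =>
      obtain ⟨Z, hZ, hDZ, hπZ⟩ := ih (Nat.le_of_succ_le hn)
      refine hnear Z hZ hDZ _ (hz.smul _)
        (norm_add_ofReal_smul_le_one (hπD.trans hd.le) hDz ⟨by positivity, ?_⟩) ?_
      · rw [div_le_one hM0]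
        exact_mod_cast hn
      · rw [hπZ, ← sub_smul, norm_smul, ← Complex.ofReal_sub, ← sub_div]
        rw [div_lt_iff₀ hγ] at hM
        rw [show ((n : ℝ) - (n + 1 : ℕ)) / M = -(1 / M) by push_cast; ring, Complex.ofReal_neg,
          norm_neg, Complex.norm_of_nonneg (by positivity), one_div_mul_eq_div, div_lt_iff₀ hM0]
        linarith
  obtain ⟨Z, hZ, hDZ, hπZ⟩ := hlift M le_rfl
  exact ⟨Z, hZ, hDZ, by rw [hπZ, div_self hM0.ne', Complex.ofReal_one, one_smul]⟩

end Lifting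

section KernelProjection

open Polynomial

variable {A : Type*} [CStarAlgebra A] {x : A} {p r : ℂ[X]} {Q : A}

-- Kaplansky's formula for the range projection of an idempotent.
lemma exists_isStarProjection_of_isIdempotentElem {G : A} (hG : IsIdempotentElem G) :
    ∃ Q, IsStarProjection Q ∧ Q * G = G ∧ G * Q = Q := by
  have hG' : star G * star G = star G := hG.star.eq
  obtain ⟨u, hu⟩ : IsUnit (1 + (G - star G) * star (G - star G)) :=
    CStarAlgebra.isUnit_of_le 1 (le_add_of_nonneg_right (mul_star_self_nonneg _))
      isStrictlyPositive_one
  have hu_eq : (u : A) = 1 + (G - star G) * (star G - G) := by rw [hu, star_sub, star_star]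
  have huG : u * G = G * star G * G := by
    rw [hu_eq]
    linear_combination (norm := noncomm_ring) (star G - 1 - G) * hG.eq - hG' * G
  have hGu : G * u = G * star G * G := by
    rw [hu_eq]
    linear_combination (norm := noncomm_ring) hG.eq * (star G - G - 1) - G * hG'
  have hcomm : Commute G u := hGu.trans huG.symm
  have hu_star : star u = u := Units.ext (by rw [Units.coe_star, hu]; simp)
  have hcomm_star : Commute (star G) u := by
    simpa only [← Units.coe_star, hu_star] using hcomm.star_star
  have hcomm_inv : Commute (G * star G) ↑u⁻¹ := (hcomm.mul_left hcomm_star).units_inv_right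
  have hQG : G * star G * ↑u⁻¹ * G = G := by
    rw [hcomm_inv.eq, mul_assoc, ← huG, Units.inv_mul_cancel_left]
  have hGQ : G * (G * star G * ↑u⁻¹) = G * star G * ↑u⁻¹ := by
    rw [← mul_assoc, ← mul_assoc, hG.eq]
  refine ⟨_, ⟨?_, ?_⟩, hQG, hGQ⟩
  · rw [IsIdempotentElem, ← mul_assoc, ← mul_assoc, hQG]
  · rw [IsSelfAdjoint, star_mul, star_mul, star_star, ← Units.coe_star_inv, hu_star, hcomm_inv.eq]

/-- `Q` is the projection onto the kernel of `p(x)`. -/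
structure IsKernelProjection (x : A) (p : ℂ[X]) (Q : A) : Prop extends IsStarProjection Q where
  mul_eq_self_iff (z : A) : Q * z = z ↔ aeval x p * z = 0

lemma exists_isKernelProjection (hpr : IsCoprime p r) (h : aeval x (p * r) = 0) :
    ∃ Q, IsKernelProjection x p Q := by
  obtain ⟨a, b, hab⟩ := hpr
  have hab_aeval : aeval x (a * p) + aeval x (b * r) = 1 := by rw [← map_add, hab, map_one]
  have hp_br : aeval x p * aeval x (b * r) = 0 := by
    rw [← map_mul, mul_left_comm, map_mul, h, mul_zero]
  obtain ⟨Q, hQ, hQG, hGQ⟩ := exists_isStarProjection_of_isIdempotentElem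
    (G := aeval x (b * r)) (by
      rw [IsIdempotentElem]
      nth_rw 1 [← sub_eq_of_eq_add' hab_aeval.symm]
      rw [sub_mul, one_mul, map_mul _ a, mul_assoc, hp_br, mul_zero, sub_zero])
  refine ⟨Q, hQ, fun z => ⟨fun hz => ?_, fun hz => ?_⟩⟩
  · rw [← hz, ← hGQ, ← mul_assoc, ← mul_assoc, hp_br, zero_mul, zero_mul]
  · have hGz : aeval x (b * r) * z = z := by
      rw [← sub_eq_of_eq_add' hab_aeval.symm, sub_mul, one_mul, map_mul, mul_assoc, hz, mul_zero,
        sub_zero]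
    rw [← hGz, ← mul_assoc, hQG]

namespace IsKernelProjection

lemma aeval_mul (hQ : IsKernelProjection x p Q) : aeval x p * Q = 0 :=
  (hQ.mul_eq_self_iff Q).1 hQ.isIdempotentElem

lemma eq_zero (hQ : IsKernelProjection x p Q) (hp : p = 1) : Q = 0 := by
  simpa [hp] using hQ.aeval_mul

lemma eq_one (hQ : IsKernelProjection x p Q) (h : aeval x p = 0) : Q = 1 := by
  simpa using (hQ.mul_eq_self_iff 1).2 (by rw [h, zero_mul])

lemma mul_aeval_mul (hQ : IsKernelProjection x p Q) {p' s : ℂ[X]} {Q' : A}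
    (hQ' : IsKernelProjection x p' Q') (h : p' ∣ p * s) :
    Q * (aeval x s * Q') = aeval x s * Q' := by
  obtain ⟨t, ht⟩ := h
  rw [hQ.mul_eq_self_iff, ← mul_assoc, ← map_mul, ht, mul_comm, map_mul, mul_assoc, hQ'.aeval_mul,
    mul_zero]

lemma mul_eq_of_dvd (hQ : IsKernelProjection x p Q) {p' : ℂ[X]} {Q' : A}
    (hQ' : IsKernelProjection x p' Q') (h : p' ∣ p) : Q * Q' = Q' := by
  simpa using hQ.mul_aeval_mul hQ' (s := 1) (by rwa [mul_one])

end IsKernelProjection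

end KernelProjection

section Flag

variable {A : Type*} [CStarAlgebra A] {Q : ℕ → A}

lemma orthogonalProjections_sub_of_flag (hQ : ∀ i, IsStarProjection (Q i))
    (hflag : ∀ ⦃i j⦄, i ≤ j → Q j * Q i = Q i) :
    OrthogonalProjections fun i => Q (i + 1) - Q i := by
  have hflag' ⦃i j : ℕ⦄ (hij : i ≤ j) : Q i * Q j = Q i := by
    simpa [(hQ _).isSelfAdjoint.star_eq] using congrArg star (hflag hij)
  have hproj (i : ℕ) : IsStarProjection (Q (i + 1) - Q i) :=
    (hQ i).sub_of_mul_eq_right (hQ (i + 1)) (hflag i.le_succ)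
  refine ⟨⟨fun i => (hproj i).isIdempotentElem, fun i j hij => ?_⟩,
    fun i => (hproj i).isSelfAdjoint⟩
  change (Q (i + 1) - Q i) * (Q (j + 1) - Q j) = 0
  rcases hij.lt_or_gt with hlt | hgt
  · rw [mul_sub, sub_mul, sub_mul, hflag' (by omega), hflag' (by omega), hflag' (by omega),
      hflag' (by omega)]
    abel
  · rw [mul_sub, sub_mul, sub_mul, hflag (by omega), hflag (by omega), hflag (by omega),
      hflag (by omega)]
    abel

end Flag

section TriangularCalculus

open Polynomial

variable {ι A : Type*} [CStarAlgebra A] [Fintype ι] {P : ι → A} {Z W x : A}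

lemma sum_mul_mul_eq (hsum : ∑ i, P i = 1) : ∑ i, ∑ j, P i * Z * P j = Z := by
  simp only [← Finset.mul_sum, hsum, mul_one, ← Finset.sum_mul, one_mul]

namespace OrthogonalProjections

lemma corner_mul_eq_sum (hP : OrthogonalProjections P) (hsum : ∑ i, P i = 1) (i j : ι) :
    P i * (Z * W) * P j = ∑ l, P i * Z * P l * (P l * W * P j) := by
  simp only [← mul_assoc, mul_assoc _ (P _) (P _), (hP.idem _).eq, ← Finset.sum_mul,
    ← Finset.mul_sum, hsum, mul_one]

lemma mul_sum_smul (hP : OrthogonalProjections P) (lam : ι → ℂ) (i : ι) :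
    P i * ∑ l, lam l • P l = lam i • P i := by
  classical
  simp [Finset.mul_sum, hP.mul_eq]

lemma sum_smul_mul (hP : OrthogonalProjections P) (lam : ι → ℂ) (i : ι) :
    (∑ l, lam l • P l) * P i = lam i • P i := by
  classical
  simp [Finset.sum_mul, hP.mul_eq]

lemma corner_sub_smul_one (hP : OrthogonalProjections P) (lam : ι → ℂ) (i : ι) :
    P i * (x - lam i • 1) * P i = P i * (x - ∑ l, lam l • P l) * P i := by
  rw [mul_sub, mul_sub, hP.mul_sum_smul, mul_smul_comm, mul_one]

end OrthogonalProjections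

variable [LinearOrder ι]

namespace IsUpperTriangular

protected lemma sum_smul (hP : OrthogonalProjections P) (lam : ι → ℂ) :
    IsUpperTriangular P (∑ i, lam i • P i) where
  sum_corner := by
    simp only [hP.mul_sum_smul, smul_mul_assoc, hP.mul_eq, smul_ite, smul_zero,
      Finset.sum_ite_eq, Finset.mem_univ, if_true]
  corner_eq_zero i j hji := by
    rw [hP.mul_sum_smul, smul_mul_assoc, hP.ortho hji.ne', smul_zero]

lemma mul (hP : OrthogonalProjections P) (hsum : ∑ i, P i = 1)
    (hZ : IsUpperTriangular P Z) (hW : IsUpperTriangular P W) : IsUpperTriangular P (Z * W) where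
  sum_corner := sum_mul_mul_eq hsum
  corner_eq_zero i j hji := by
    rw [hP.corner_mul_eq_sum hsum]
    refine Finset.sum_eq_zero fun l _ => ?_
    rcases lt_or_ge l i with hlt | hge
    · rw [hZ.corner_eq_zero hlt, zero_mul]
    · rw [hW.corner_eq_zero (hji.trans_le hge), mul_zero]

lemma corner_mul (hP : OrthogonalProjections P) (hsum : ∑ i, P i = 1)
    (hZ : IsUpperTriangular P Z) (hW : IsUpperTriangular P W) (i : ι) :
    P i * (Z * W) * P i = (P i * Z * P i) * (P i * W * P i) := by
  rw [hP.corner_mul_eq_sum hsum]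
  refine Finset.sum_eq_single i (fun l _ hl => ?_) (by simp)
  rcases hl.lt_or_gt with hlt | hgt
  · rw [hZ.corner_eq_zero hlt, zero_mul]
  · rw [hW.corner_eq_zero hgt, mul_zero]

protected lemma pow_succ (hP : OrthogonalProjections P) (hsum : ∑ i, P i = 1)
    (hZ : IsUpperTriangular P Z) (m : ℕ) : IsUpperTriangular P (Z ^ (m + 1)) := by
  induction m with
  | zero => simpa only [zero_add, pow_one] using hZ
  | succ m ih => simpa only [pow_succ] using ih.mul hP hsum hZ

lemma corner_pow_succ (hP : OrthogonalProjections P) (hsum : ∑ i, P i = 1)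
    (hZ : IsUpperTriangular P Z) (m : ℕ) (i : ι) :
    P i * Z ^ (m + 1) * P i = (P i * Z * P i) ^ (m + 1) := by
  induction m with
  | zero => simp only [zero_add, pow_one]
  | succ m ih =>
    rw [pow_succ, corner_mul hP hsum (hZ.pow_succ hP hsum m) hZ, ih, ← pow_succ]

end IsUpperTriangular

variable {lam : ι → ℂ} {k : ι → ℕ}

lemma IsUpperTriangular.sub_smul_one (hP : OrthogonalProjections P) (hsum : ∑ i, P i = 1)
    (hx : IsUpperTriangular P (x - ∑ l, lam l • P l)) (c : ℂ) :
    IsUpperTriangular P (x - c • 1) := by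
  have hdiag := IsUpperTriangular.sum_smul hP fun l => lam l - c
  simp only [sub_smul, Finset.sum_sub_distrib, ← Finset.smul_sum, hsum] at hdiag
  simpa using hx.add hdiag

lemma IsNilTriangular.prod_sub_smul_pow_mul_eq_zero (hP : OrthogonalProjections P)
    (hsum : ∑ i, P i = 1) (hx : IsNilTriangular P k (x - ∑ l, lam l • P l)) (i : ι) :
    ∀ s : Finset ι, (∀ j ≤ i, j ∈ s) →
      aeval x (∏ j ∈ s, (X - C (lam j)) ^ (k j + 1)) * P i = 0 := by
  induction i using WellFoundedLT.induction with
  | ind i ih =>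
  intro s hs
  have hxi := hx.sub_smul_one hP hsum (lam i)
  have hsplit : (x - lam i • 1) ^ (k i + 1) * P i =
      ∑ l, P l * ((x - lam i • 1) ^ (k i + 1) * P i) := by
    rw [← Finset.sum_mul, hsum, one_mul]
  rw [← Finset.prod_erase_mul s _ (hs i le_rfl), map_mul, mul_assoc]
  have haeval : aeval x ((X - C (lam i)) ^ (k i + 1)) = (x - lam i • 1) ^ (k i + 1) := by
    simp [Algebra.algebraMap_eq_smul_one]
  rw [haeval, hsplit, Finset.mul_sum]
  refine Finset.sum_eq_zero fun l _ => ?_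
  rcases lt_trichotomy l i with hlt | rfl | hgt
  · rw [← mul_assoc, ih l hlt, zero_mul]
    exact fun j hj => Finset.mem_erase.2 ⟨(hj.trans_lt hlt).ne, hs j (hj.trans hlt.le)⟩
  · rw [← mul_assoc (P _), hxi.corner_pow_succ hP hsum, hP.corner_sub_smul_one, hx.corner_pow,
      mul_zero]
  · rw [← mul_assoc (P _), (hxi.pow_succ hP hsum _).corner_eq_zero hgt, mul_zero]

lemma IsNilTriangular.aeval_prod_eq_zero (hP : OrthogonalProjections P)
    (hsum : ∑ i, P i = 1) (hx : IsNilTriangular P k (x - ∑ l, lam l • P l)) :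
    aeval x (∏ i, (X - C (lam i)) ^ (k i + 1)) = 0 := by
  rw [← mul_one (aeval x _), ← hsum, Finset.mul_sum]
  exact Finset.sum_eq_zero fun i _ =>
    hx.prod_sub_smul_pow_mul_eq_zero hP hsum i _ fun j _ => Finset.mem_univ j

end TriangularCalculus

section TriangularForm

open Polynomial

variable {A : Type*} [CStarAlgebra A] {x : A} {n : ℕ} {lam : Fin n → ℂ} {k : Fin n → ℕ}

lemma isCoprime_prod_X_sub_C_pow {ι : Type*} {lam : ι → ℂ} (hlam : Function.Injective lam)
    (k : ι → ℕ) {s t : Finset ι} (hst : Disjoint s t) :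
    IsCoprime (∏ i ∈ s, (X - C (lam i)) ^ k i)
      (∏ i ∈ t, (X - C (lam i)) ^ k i) :=
  IsCoprime.prod_left fun i hi => IsCoprime.prod_right fun j hj =>
    (pairwise_coprime_X_sub_C hlam (Finset.disjoint_iff_ne.1 hst i hi j hj)).pow

lemma exists_isKernelProjection_prod (hlam : Function.Injective lam)
    (hx : aeval x (∏ i, (X - C (lam i)) ^ k i) = 0) (m : ℕ) :
    ∃ Q, IsKernelProjection x (∏ i with i.val < m, (X - C (lam i)) ^ k i) Q :=
  exists_isKernelProjection
    (isCoprime_prod_X_sub_C_pow hlam k (Finset.disjoint_filter_filter_not _ _ _))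
    (by rwa [Finset.prod_filter_mul_prod_filter_not])

lemma exists_isNilTriangular_of_isKernelProjection {p : ℕ → ℂ[X]} {Q : ℕ → A}
    (hp0 : p 0 = 1) (hp : ∀ i : Fin n, p (i + 1) = p i * (X - C (lam i)) ^ (k i + 1))
    (hQ : ∀ i, IsKernelProjection x (p i) (Q i))
    (hflag : ∀ ⦃i j⦄, i ≤ j → Q j * Q i = Q i) (hpx : aeval x (p n) = 0) :
    ∃ P : Fin n → A, OrthogonalProjections P ∧ ∑ i, P i = 1 ∧
      IsNilTriangular P k (x - ∑ i, lam i • P i) := by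
  have hPQ := orthogonalProjections_sub_of_flag (fun i => (hQ i).toIsStarProjection) hflag
  obtain ⟨P, hP_eq⟩ : ∃ P : Fin n → A, P = fun i : Fin n => Q (i + 1) - Q i := ⟨_, rfl⟩
  have hP : OrthogonalProjections P := hP_eq ▸ hPQ.comp Fin.valEmbedding
  have hsum : ∑ i, P i = 1 := by
    rw [hP_eq, Fin.sum_univ_eq_sum_range (fun i => Q (i + 1) - Q i), Finset.sum_range_sub,
      (hQ n).eq_one hpx, (hQ 0).eq_zero hp0, sub_zero]
  have hP_mul (i : Fin n) {j : ℕ} (hj : j ≤ i) : P i * Q j = 0 := by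
    rw [hP_eq, sub_mul, hflag (by omega), hflag hj, sub_self]
  have hQ_mul (i : Fin n) : Q (i + 1) * P i = P i := by
    rw [hP_eq, mul_sub, hflag le_rfl, hflag i.val.le_succ]
  have htri : IsUpperTriangular P (x - ∑ i, lam i • P i) := by
    refine ⟨sum_mul_mul_eq hsum, fun i j hji => ?_⟩
    have hinv : Q (j + 1) * (x * Q (j + 1)) = x * Q (j + 1) := by
      simpa using (hQ _).mul_aeval_mul (hQ (j + 1)) (s := X) (Dvd.intro _ rfl)
    calc P i * (x - ∑ l, lam l • P l) * P j = P i * (x * Q (j + 1)) * P j := by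
          rw [mul_sub, sub_mul, hP.mul_sum_smul, smul_mul_assoc, hP.ortho hji.ne', smul_zero,
            sub_zero, mul_assoc, mul_assoc, mul_assoc x, hQ_mul]
      _ = 0 := by rw [← hinv, ← mul_assoc, hP_mul i hji, zero_mul, zero_mul]
  refine ⟨P, hP, hsum, htri, fun i => ?_⟩
  have hblock : Q i * ((x - lam i • 1) ^ (k i + 1) * Q (i + 1)) =
      (x - lam i • 1) ^ (k i + 1) * Q (i + 1) := by
    have haeval := (hQ i).mul_aeval_mul (hQ (i + 1))
      (s := (X - C (lam i)) ^ (k i + 1)) (hp i ▸ dvd_rfl)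
    simpa [Algebra.algebraMap_eq_smul_one] using haeval
  calc (P i * (x - ∑ l, lam l • P l) * P i) ^ (k i + 1)
      = P i * (x - lam i • 1) ^ (k i + 1) * P i := by
        rw [← hP.corner_sub_smul_one, (htri.sub_smul_one hP hsum (lam i)).corner_pow_succ hP hsum]
    _ = P i * ((x - lam i • 1) ^ (k i + 1) * Q (i + 1)) * P i := by
        rw [mul_assoc, mul_assoc, mul_assoc _ (Q _), hQ_mul]
    _ = 0 := by rw [← hblock, ← mul_assoc, hP_mul i le_rfl, zero_mul, zero_mul]

theorem exists_isNilTriangular (hlam : Function.Injective lam)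
    (hx : aeval x (∏ i, (X - C (lam i)) ^ (k i + 1)) = 0) :
    ∃ P : Fin n → A, OrthogonalProjections P ∧ ∑ i, P i = 1 ∧
      IsNilTriangular P k (x - ∑ i, lam i • P i) := by
  choose Q hQ using exists_isKernelProjection_prod hlam hx
  have hflag ⦃i j : ℕ⦄ (hij : i ≤ j) : Q j * Q i = Q i :=
    (hQ j).mul_eq_of_dvd (hQ i) <| Finset.prod_dvd_prod_of_subset _ _ _ <|
      Finset.monotone_filter_right _ fun l _ (hl : l.val < i) => hl.trans_le hij
  refine exists_isNilTriangular_of_isKernelProjection (by simp) (fun i => ?_) hQ hflag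
    (by simpa using hx)
  have hinsert : Finset.univ.filter (fun l : Fin n => l.val < i.val + 1) =
      insert i (Finset.univ.filter fun l => l.val < i.val) := by
    ext l
    simp only [Finset.mem_filter, Finset.mem_univ, true_and, Finset.mem_insert, Fin.ext_iff]
    omega
  rw [hinsert, Finset.prod_insert (by simp), mul_comm]

end TriangularForm

section PeripheralBlocks

variable {A : Type*} [CStarAlgebra A] {x N P : A} {lam : ℂ} {m : ℕ}

-- The powers of the contraction `1 + N` act on the Jordan chain `N ^ m`, `N ^ (m + 1)` as
-- `N ^ m ↦ N ^ m + r • N ^ (m + 1)`, which stays bounded only if `N ^ (m + 1) = 0`.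
lemma pow_succ_eq_zero_of_norm_one_add_le (hN : ‖1 + N‖ ≤ 1) (h : N ^ (m + 2) = 0) :
    N ^ (m + 1) = 0 := by
  have hiter (r : ℕ) : (1 + N) ^ r * N ^ m = N ^ m + r • N ^ (m + 1) := by
    induction r with
    | zero => simp
    | succ r ih =>
      rw [pow_succ', mul_assoc, ih, add_mul, one_mul, mul_add, ← pow_succ', mul_smul_comm,
        ← pow_succ', h, smul_zero, add_zero, add_assoc, succ_nsmul]
  have hbound (r : ℕ) : r * ‖N ^ (m + 1)‖ ≤ 2 * ‖N ^ m‖ := by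
    have hpow : ‖(1 + N) ^ r * N ^ m‖ ≤ 1 * ‖N ^ m‖ := by
      refine (norm_mul_le _ _).trans (mul_le_mul_of_nonneg_right ?_ (norm_nonneg _))
      simpa using norm_pow_le_pow_of_le hN r
    calc r * ‖N ^ (m + 1)‖ = ‖(1 + N) ^ r * N ^ m - N ^ m‖ := by
          rw [hiter, add_sub_cancel_left, ← Nat.cast_smul_eq_nsmul ℝ, norm_smul]; simp
      _ ≤ 2 * ‖N ^ m‖ := (norm_sub_le _ _).trans (by linarith)
  by_contra hne
  obtain ⟨r, hr⟩ := exists_nat_gt (2 * ‖N ^ m‖ / ‖N ^ (m + 1)‖)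
  exact absurd (hbound r) (not_le.2 ((div_lt_iff₀ (norm_pos_iff.2 hne)).1 hr))

lemma eq_zero_of_norm_one_add_le (hN : ‖1 + N‖ ≤ 1) (h : N ^ (m + 1) = 0) : N = 0 := by
  induction m with
  | zero => simpa using h
  | succ m ih => exact ih (pow_succ_eq_zero_of_norm_one_add_le hN h)

lemma eq_zero_of_norm_smul_one_add_le (hlam : ‖lam‖ = 1) (hN : ‖lam • 1 + N‖ ≤ 1)
    (h : N ^ (m + 1) = 0) : N = 0 := by
  have hlam0 : lam ≠ 0 := norm_ne_zero_iff.1 (by rw [hlam]; exact one_ne_zero)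
  refine (smul_eq_zero_iff_right (inv_ne_zero hlam0)).1
    (eq_zero_of_norm_one_add_le (m := m) ?_ (by rw [smul_pow, h, smul_zero]))
  rw [← inv_smul_smul₀ hlam0 (1 : A), ← smul_add, norm_smul, norm_inv, hlam, inv_one, one_mul]
  exact hN

lemma mul_eq_smul_of_corner_eq_smul (hP : IsStarProjection P) (hx : ‖x‖ ≤ 1) (hlam : ‖lam‖ = 1)
    (h : P * x * P = lam • P) : x * P = lam • P := by
  have hstarP : star P = P := hP.isSelfAdjoint
  have hPP : P * P = P := hP.isIdempotentElem
  have hlam_sq : star lam * lam = 1 := by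
    rw [← starRingEnd_apply, Complex.conj_mul', hlam]; simp
  have hdecomp : star (x * P) * (x * P) = P + star ((1 - P) * x * P) * ((1 - P) * x * P) := by
    have hcorner : star (P * x * P) * (P * x * P) = P := by
      rw [h, star_smul, smul_mul_smul_comm, hstarP, hPP, hlam_sq, one_smul]
    simp only [star_mul, hstarP] at hcorner
    simp only [star_mul, star_sub, star_one, hstarP]
    linear_combination (norm := noncomm_ring) hcorner + (-2 * P) * star x * hPP * x * P
  have hle : star (x * P) * (x * P) ≤ P := by
    have hconj := star_left_conjugate_le_conjugate (star_mul_self_le_of_norm_le hx) P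
    simpa [hstarP, hPP, mul_assoc] using hconj
  have hoff : (1 - P) * x * P = 0 := by
    rw [← CStarRing.star_mul_self_eq_zero_iff]
    exact le_antisymm ((add_le_iff_nonpos_right P).1 (hdecomp ▸ hle)) (star_mul_self_nonneg _)
  rw [← h, ← sub_eq_zero, ← hoff]
  noncomm_ring

lemma mul_eq_smul_of_corner_eq_smul' (hP : IsStarProjection P) (hx : ‖x‖ ≤ 1) (hlam : ‖lam‖ = 1)
    (h : P * x * P = lam • P) : P * x = lam • P := by
  have hstar := mul_eq_smul_of_corner_eq_smul (x := star x) (lam := star lam) hP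
    (by rwa [norm_star]) (by rwa [norm_star])
    (by simpa [hP.isSelfAdjoint.star_eq, mul_assoc] using congrArg star h)
  simpa [hP.isSelfAdjoint.star_eq] using congrArg star hstar

end PeripheralBlocks

section Assemble

universe u

variable {ι : Type*} {A C : Type u} [CStarAlgebra A] [CStarAlgebra C] {P : ι → A}
  {x z : A} {lam : ι → ℂ} {k : ι → ℕ}

namespace OrthogonalProjections

lemma mul_sum_eq_ite (hP : OrthogonalProjections P) (s : Finset ι) [DecidablePred (· ∈ s)] (i : ι) :
    P i * ∑ j ∈ s, P j = if i ∈ s then P i else 0 := by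
  classical
  simp [Finset.mul_sum, hP.mul_eq]

lemma sum_mul_eq_ite (hP : OrthogonalProjections P) (s : Finset ι) [DecidablePred (· ∈ s)] (i : ι) :
    (∑ j ∈ s, P j) * P i = if i ∈ s then P i else 0 := by
  classical
  simp [Finset.sum_mul, hP.mul_eq]

lemma sum_smul_mul_sum [Fintype ι] (hP : OrthogonalProjections P) (lam : ι → ℂ) (s : Finset ι) :
    (∑ i, lam i • P i) * ∑ i ∈ s, P i = ∑ i ∈ s, lam i • P i := by
  simp only [Finset.mul_sum, hP.sum_smul_mul]

lemma sum_mul_sum_smul [Fintype ι] (hP : OrthogonalProjections P) (lam : ι → ℂ) (s : Finset ι) :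
    (∑ i ∈ s, P i) * ∑ i, lam i • P i = ∑ i ∈ s, lam i • P i := by
  simp only [Finset.sum_mul, hP.mul_sum_smul]

lemma norm_sum_smul_le (hP : OrthogonalProjections P) (s : Finset ι) {d : ℝ} (hd : 0 ≤ d)
    (hlam : ∀ i ∈ s, ‖lam i‖ ≤ d) : ‖∑ i ∈ s, lam i • P i‖ ≤ d := by
  have hcorner (i : ι) : lam i • P i = P i * (lam i • 1) * P i := by
    rw [mul_smul_comm, mul_one, smul_mul_assoc, (hP.idem i).eq]
  simp only [hcorner]
  refine hP.norm_sum_corner_le s hd fun i hi => (norm_smul_le _ _).trans ?_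
  simpa using mul_le_mul (hlam i hi) norm_one_le_one (norm_nonneg _) hd

end OrthogonalProjections

lemma exists_lt_one_forall_norm_le [Finite ι] (lam : ι → ℂ) :
    ∃ d : ℝ, 0 ≤ d ∧ d < 1 ∧ ∀ i, ‖lam i‖ < 1 → ‖lam i‖ ≤ d := by
  cases nonempty_fintype ι
  let d : NNReal := (Finset.univ.filter fun i => ‖lam i‖ < 1).sup fun i => ‖lam i‖₊
  refine ⟨d, d.coe_nonneg, ?_, fun i hi => ?_⟩
  · rw [← NNReal.coe_one, NNReal.coe_lt_coe, Finset.sup_lt_iff zero_lt_one]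
    exact fun i hi => (Finset.mem_filter.1 hi).2
  · exact NNReal.coe_le_coe.2
      (Finset.le_sup (f := fun i => ‖lam i‖₊) (Finset.mem_filter.2 ⟨Finset.mem_univ i, hi⟩))

variable [Fintype ι] [LinearOrder ι]

lemma IsNilTriangular.compress (hP : OrthogonalProjections P) (hz : IsNilTriangular P k z)
    (s : Finset ι) : IsNilTriangular P k ((∑ i ∈ s, P i) * z * ∑ i ∈ s, P i) := by
  have hcorner (i j : ι) : P i * ((∑ l ∈ s, P l) * z * ∑ l ∈ s, P l) * P j =
      (∑ l ∈ s, P l) * (P i * z * P j) * ∑ l ∈ s, P l := by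
    simp only [← mul_assoc, hP.mul_sum_eq_ite, hP.sum_mul_eq_ite]
    simp only [mul_assoc, hP.mul_sum_eq_ite, hP.sum_mul_eq_ite]
  refine ⟨⟨?_, fun i j hji => ?_⟩, fun i => ?_⟩
  · conv_rhs => rw [← hz.sum_corner]
    simp only [hcorner, ← Finset.mul_sum, ← Finset.sum_mul]
  · rw [hcorner, hz.corner_eq_zero hji, mul_zero, zero_mul]
  · rw [← mul_assoc, ← mul_assoc, hP.mul_sum_eq_ite, mul_assoc, hP.sum_mul_eq_ite]
    split_ifs
    · exact hz.corner_pow i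
    · simp

lemma IsNilTriangular.mul_eq_zero_of_norm_eq_one (hP : OrthogonalProjections P) (hx : ‖x‖ ≤ 1)
    (hz : IsNilTriangular P k (x - ∑ i, lam i • P i)) {i : ι} (hlam : ‖lam i‖ = 1) :
    P i * (x - ∑ i, lam i • P i) = 0 ∧ (x - ∑ i, lam i • P i) * P i = 0 := by
  have hPi := hP.isStarProjection i
  have hdecomp : lam i • 1 + P i * (x - ∑ i, lam i • P i) * P i =
      P i * x * P i + (1 - P i) * (lam i • 1) * (1 - P i) := by
    rw [mul_sub, hP.mul_sum_smul, sub_mul, smul_mul_assoc, (hP.idem i).eq, mul_smul_comm, mul_one,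
      smul_mul_assoc, hPi.one_sub.isIdempotentElem.eq, smul_sub]
    abel
  have hcontr : ‖lam i • 1 + P i * (x - ∑ i, lam i • P i) * P i‖ ≤ 1 := by
    rw [hdecomp]
    exact norm_conj_add_conj_one_sub_le hPi hx (by simpa [norm_smul, hlam] using norm_one_le_one)
  have hcorner : P i * x * P i = lam i • P i := by
    rw [← sub_eq_zero, ← eq_zero_of_norm_smul_one_add_le hlam hcontr (hz.corner_pow i), mul_sub,
      hP.mul_sum_smul, sub_mul, smul_mul_assoc, (hP.idem i).eq]
  constructor
  · rw [mul_sub, mul_eq_smul_of_corner_eq_smul' hPi hx hlam hcorner, hP.mul_sum_smul, sub_self]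
  · rw [sub_mul, mul_eq_smul_of_corner_eq_smul hPi hx hlam hcorner, hP.sum_smul_mul, sub_self]

lemma IsNilTriangular.sum_mul_eq_self (hP : OrthogonalProjections P) (hsum : ∑ i, P i = 1)
    (hlam : ∀ i, ‖lam i‖ ≤ 1) (hx : ‖x‖ ≤ 1) (hz : IsNilTriangular P k (x - ∑ i, lam i • P i)) :
    (∑ i with ‖lam i‖ < 1, P i) * (x - ∑ i, lam i • P i) = x - ∑ i, lam i • P i ∧
      (x - ∑ i, lam i • P i) * ∑ i with ‖lam i‖ < 1, P i = x - ∑ i, lam i • P i := by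
  have hunimodular {i : ι} (hi : i ∉ ({i | ‖lam i‖ < 1} : Finset ι)) : ‖lam i‖ = 1 :=
    (hlam i).antisymm (not_lt.1 fun h => hi (by simpa using h))
  constructor
  · conv_rhs => rw [← one_mul (x - _), ← hsum, Finset.sum_mul]
    rw [Finset.sum_mul]
    exact Finset.sum_subset (Finset.subset_univ _) fun i _ hi =>
      (hz.mul_eq_zero_of_norm_eq_one hP hx (hunimodular hi)).1
  · conv_rhs => rw [← mul_one (x - _), ← hsum, Finset.mul_sum]
    rw [Finset.mul_sum]
    exact Finset.sum_subset (Finset.subset_univ _) fun i _ hi =>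
      (hz.mul_eq_zero_of_norm_eq_one hP hx (hunimodular hi)).2

theorem exists_map_eq_isNilTriangular_sub {π : A →⋆ₐ[ℂ] C} (hπ : Function.Surjective π)
    (hP : OrthogonalProjections P) (hsum : ∑ i, P i = 1) (hlam : ∀ i, ‖lam i‖ ≤ 1) {x : C}
    (hx : ‖x‖ ≤ 1) (hz : IsNilTriangular (fun i => π (P i)) k (x - ∑ i, lam i • π (P i))) :
    ∃ y, π y = x ∧ ‖y‖ ≤ 1 ∧ IsNilTriangular P k (y - ∑ i, lam i • P i) := by
  obtain ⟨d, hd0, hd1, hd⟩ := exists_lt_one_forall_norm_le lam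
  obtain ⟨hpz, hzp⟩ := hz.sum_mul_eq_self (hP.map π) (by rw [← map_sum, hsum, map_one]) hlam hx
  have hp := hP.isStarProjection_sum {i | ‖lam i‖ < 1}
  have hDp := hP.sum_smul_mul_sum lam {i | ‖lam i‖ < 1}
  have hpD := hP.sum_mul_sum_smul lam {i | ‖lam i‖ < 1}
  rw [← map_sum] at hpz hzp
  set D := ∑ i, lam i • P i
  set p := ∑ i with ‖lam i‖ < 1, P i
  set z := x - ∑ i, lam i • π (P i)
  have hπD : π D + z = x := by simp [D, z]
  have hcomm : p * D = D * p := hpD.trans hDp.symm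
  have hDpz : ‖π (D * p) + z‖ ≤ 1 := by
    have hcompress : π (D * p) + z = π p * x * π p := by
      rw [← hπD, mul_add, add_mul, hpz, hzp, ← map_mul, ← map_mul, hcomm, mul_assoc,
        hp.isIdempotentElem.eq]
    rw [hcompress]
    exact norm_compress_le (hp.map π).norm_le (hp.map π).norm_le hx
  have hDp_norm : ‖D * p‖ ≤ d :=
    hDp ▸ hP.norm_sum_smul_le _ hd0 fun i hi => hd i (Finset.mem_filter.1 hi).2
  obtain ⟨Z, hZ, hDZ, hπZ⟩ := exists_isNilTriangular_map_eq hπ hP hd1 hDp_norm hz hDpz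
  refine ⟨D + p * Z * p, ?_, ?_, ?_⟩
  · rw [map_add, map_mul, map_mul, hπZ, hpz, hzp, hπD]
  · have hsplit : D + p * Z * p = p * (D * p + Z) * p + (1 - p) * D * (1 - p) := by
      linear_combination (norm := noncomm_ring) hcomm - hcomm * p - hcomm * p * p
        - 2 * D * hp.isIdempotentElem.eq - D * p * hp.isIdempotentElem.eq
    rw [hsplit]
    exact norm_conj_add_conj_one_sub_le hp hDZ
      (hP.norm_sum_smul_le Finset.univ zero_le_one fun i _ => hlam i)
  · rw [add_sub_cancel_left]
    exact hZ.compress hP _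

end Assemble

section LiftProjections

universe u

variable {A C : Type u} [CStarAlgebra A] [CStarAlgebra C]

lemma map_cfc_of_continuousOn {A C : Type*} [CStarAlgebra A] [CStarAlgebra C] (φ : A →⋆ₐ[ℂ] C)
    {a : A} (ha : IsSelfAdjoint a) {f : ℝ → ℝ} (hf : ContinuousOn f (spectrum ℝ a)) :
    φ (cfc f a) = cfc f (φ a) :=
  StarAlgHom.map_cfc φ f a hf (map_continuous φ) ha (ha.map φ)

lemma exists_map_eq_zero_forall_spectrum_subset (q : A →⋆ₐ[ℂ] C) {H : A} (hH : IsSelfAdjoint H)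
    {U : Set ℝ} (hU : IsOpen U) (hqH : spectrum ℝ (q H) ⊆ U) :
    ∃ c, q c = 0 ∧ ∀ {B : Type u} [CStarAlgebra B] (qB : A →⋆ₐ[ℂ] B), ‖qB c‖ < 1 →
      spectrum ℝ (qB H) ⊆ U := by
  obtain ⟨g, hg0, hg1, -⟩ := exists_continuous_zero_one_of_isClosed
    (spectrum.isClosed (𝕜 := ℝ) (q H))
    hU.isClosed_compl (Set.disjoint_compl_right_iff_subset.2 hqH)
  refine ⟨cfc g H, ?_, fun {B} _ qB hqB t ht => by_contra fun htU => ?_⟩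
  · rw [map_cfc_of_continuousOn q hH g.continuous.continuousOn, cfc_congr hg0]
    exact cfc_const_zero ℝ _
  · rw [map_cfc_of_continuousOn qB hH g.continuous.continuousOn] at hqB
    have hg_le := norm_apply_le_norm_cfc g (qB H) ht g.continuous.continuousOn (hH.map qB)
    simp only [hg1 htU, Pi.one_apply, norm_one] at hg_le
    exact hqB.not_ge hg_le

lemma spectrum_pi_ofReal {ι : Type*} (v : ι → ℝ) :
    spectrum ℝ (fun i => (v i : ℂ)) = Set.range v := by
  rw [Pi.spectrum_eq, ← Set.iUnion_singleton_eq_range]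
  exact Set.iUnion_congr fun i => spectrum.scalar_eq (v i)

variable {ι : Type*} [Fintype ι] {P : ι → A}

/-- The star homomorphism `v ↦ ∑ i, v i • P i` given by orthogonal projections with sum `1`. -/
noncomputable def OrthogonalProjections.diagonal (hP : OrthogonalProjections P)
    (hsum : ∑ i, P i = 1) : (ι → ℂ) →⋆ₐ[ℂ] A where
  toFun v := ∑ i, v i • P i
  map_one' := by simpa using hsum
  map_mul' v w := by
    simp only [Finset.sum_mul, smul_mul_assoc, hP.mul_sum_smul, smul_smul, Pi.mul_apply]
  map_zero' := by simp
  map_add' v w := by simp only [Pi.add_apply, add_smul, Finset.sum_add_distrib]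
  commutes' c := by
    simp only [Pi.algebraMap_apply, Algebra.algebraMap_self_apply, ← Finset.smul_sum, hsum,
      Algebra.algebraMap_eq_smul_one]
  map_star' v := by
    simp only [star_sum, star_smul, Pi.star_apply, (hP.isSelfAdjoint _).star_eq]

lemma OrthogonalProjections.isSelfAdjoint_sum_smul (hP : OrthogonalProjections P) (v : ι → ℝ) :
    IsSelfAdjoint (∑ i, v i • P i) :=
  isSelfAdjoint_sum _ fun i _ => (IsSelfAdjoint.all (v i)).smul (hP.isSelfAdjoint i)

lemma OrthogonalProjections.diagonal_ofReal (hP : OrthogonalProjections P) (hsum : ∑ i, P i = 1)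
    (v : ι → ℝ) : hP.diagonal hsum (fun i => (v i : ℂ)) = ∑ i, v i • P i :=
  Finset.sum_congr rfl fun i _ => Complex.coe_smul (v i) (P i)

lemma OrthogonalProjections.spectrum_sum_smul_subset (hP : OrthogonalProjections P)
    (hsum : ∑ i, P i = 1) (v : ι → ℝ) : spectrum ℝ (∑ i, v i • P i) ⊆ Set.range v := by
  rw [← hP.diagonal_ofReal hsum, ← spectrum_pi_ofReal v]
  exact AlgHom.spectrum_apply_subset ((hP.diagonal hsum).toAlgHom.restrictScalars ℝ) _

lemma OrthogonalProjections.cfc_sum_smul (hP : OrthogonalProjections P)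
    (hsum : ∑ i, P i = 1) (v : ι → ℝ) (f : ℝ → ℝ) :
    cfc f (∑ i, v i • P i) = ∑ i, f (v i) • P i := by
  have hv : IsSelfAdjoint fun i => (v i : ℂ) := by
    ext i
    exact Complex.conj_ofReal (v i)
  have hf : ContinuousOn f (Set.range v) := (Set.finite_range v).continuousOn f
  rw [← spectrum_pi_ofReal] at hf
  rw [← hP.diagonal_ofReal hsum, ← hP.diagonal_ofReal hsum, ← map_cfc_of_continuousOn _ hv hf]
  congr 1 with i
  exact (map_cfc_of_continuousOn (Pi.evalStarAlgHom ℂ (fun _ => ℂ) i) hv hf).trans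
    (cfc_algebraMap (v i) f)

lemma indicator_ball_natCast {i j : ℕ} {t : ℝ} (ht : t ∈ Metric.ball (j : ℝ) (1 / 2)) :
    (Metric.ball (i : ℝ) (1 / 2)).indicator 1 t = if i = j then (1 : ℝ) else 0 := by
  split_ifs with hij
  · subst hij
    exact Set.indicator_of_mem ht _
  · refine Set.indicator_of_notMem (fun hti => hij ?_) _
    have hdist : dist (i : ℝ) j < 1 := by
      linarith [dist_triangle_left (i : ℝ) j t, Metric.mem_ball.1 ht, Metric.mem_ball.1 hti]
    rw [Nat.dist_cast_real] at hdist
    exact Nat.pairwise_one_le_dist.eq (not_le.2 hdist)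

lemma exists_isSelfAdjoint_map_eq (q : A →⋆ₐ[ℂ] C) (hq : Function.Surjective q) {h : C}
    (hh : IsSelfAdjoint h) : ∃ H, IsSelfAdjoint H ∧ q H = h := by
  obtain ⟨Z, rfl⟩ := hq h
  exact ⟨realPart Z, (realPart Z).2, by rw [map_realPart]; exact hh.coe_realPart⟩

lemma exists_orthogonalProjections_map_eq (π : A →⋆ₐ[ℂ] C) {n : ℕ} {P : Fin n → C}
    (hP : OrthogonalProjections P) (hsum : ∑ i, P i = 1) {H : A} (hH : IsSelfAdjoint H)
    (hπH : π H = ∑ i : Fin n, (i : ℝ) • P i)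
    (hspec : spectrum ℝ H ⊆ ⋃ i : Fin n, Metric.ball (i : ℝ) (1 / 2)) :
    ∃ P' : Fin n → A, OrthogonalProjections P' ∧ ∑ i, P' i = 1 ∧ ∀ i, π (P' i) = P i := by
  let f : Fin n → ℝ → ℝ := fun i => (Metric.ball (i : ℝ) (1 / 2)).indicator 1
  have hf : ∀ i j : Fin n, ∀ t ∈ Metric.ball (j : ℝ) (1 / 2), f i t = if i = j then 1 else 0 :=
    fun i j t ht => by simp only [f, indicator_ball_natCast ht, Fin.val_inj]
  have hcont : ∀ i, ContinuousOn (f i) (spectrum ℝ H) := fun i t ht => by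
    obtain ⟨j, hj⟩ := Set.mem_iUnion.1 (hspec ht)
    have hlocal : (f i) =ᶠ[𝓝 t] fun _ => if i = j then 1 else 0 :=
      eventually_of_mem (Metric.isOpen_ball.mem_nhds hj) (hf i j)
    exact (continuousAt_const.congr hlocal.symm).continuousWithinAt
  have hmul : ∀ i j, cfc (f i) H * cfc (f j) H = if i = j then cfc (f i) H else 0 := fun i j => by
    rw [← cfc_mul _ _ H (hcont i) (hcont j), ← cfc_const_zero ℝ H, ← apply_ite (cfc · H)]
    refine cfc_congr fun t ht => ?_
    obtain ⟨l, hl⟩ := Set.mem_iUnion.1 (hspec ht)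
    split_ifs <;> simp only [hf _ l t hl] <;> grind
  refine ⟨fun i => cfc (f i) H, ⟨⟨fun i => ?_, fun i j hij => ?_⟩, fun i => cfc_predicate _ _⟩,
    ?_, fun i => ?_⟩
  · exact (hmul i i).trans (if_pos rfl)
  · exact (hmul i j).trans (if_neg hij)
  · rw [← cfc_sum_univ f H hcont, ← cfc_const_one ℝ H]
    refine cfc_congr fun t ht => ?_
    obtain ⟨l, hl⟩ := Set.mem_iUnion.1 (hspec ht)
    simp only [Finset.sum_apply, hf _ l t hl, Finset.sum_ite_eq', Finset.mem_univ, if_true]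
  · rw [map_cfc_of_continuousOn π hH (hcont i), hπH, hP.cfc_sum_smul hsum]
    simp only [hf i _ _ (Metric.mem_ball_self one_half_pos), ite_smul, one_smul, zero_smul,
      Finset.sum_ite_eq, Finset.mem_univ, if_true]

lemma exists_forall_exists_orthogonalProjections_map_eq (q : A →⋆ₐ[ℂ] C)
    (hq : Function.Surjective q) {n : ℕ} {P : Fin n → C} (hP : OrthogonalProjections P)
    (hsum : ∑ i, P i = 1) :
    ∃ c, q c = 0 ∧ ∀ {B : Type u} [CStarAlgebra B] (qB : A →⋆ₐ[ℂ] B) (π : B →⋆ₐ[ℂ] C),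
      (∀ a, π (qB a) = q a) → ‖qB c‖ < 1 → ∃ P' : Fin n → B, OrthogonalProjections P' ∧
        ∑ i, P' i = 1 ∧ ∀ i, π (P' i) = P i := by
  obtain ⟨H, hH, hqH⟩ := exists_isSelfAdjoint_map_eq q hq
    (hP.isSelfAdjoint_sum_smul fun i : Fin n => (i : ℝ))
  have hqspec : spectrum ℝ (q H) ⊆ ⋃ i : Fin n, Metric.ball (i : ℝ) (1 / 2) := by
    rw [hqH]
    refine (hP.spectrum_sum_smul_subset hsum _).trans (Set.range_subset_iff.2 fun i => ?_)
    exact Set.mem_iUnion_of_mem i (Metric.mem_ball_self (by norm_num))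
  obtain ⟨c, hc, hspec⟩ := exists_map_eq_zero_forall_spectrum_subset q hH
    (isOpen_iUnion fun _ => Metric.isOpen_ball) hqspec
  exact ⟨c, hc, fun qB π hπ hcB => exists_orthogonalProjections_map_eq π hP hsum (hH.map qB)
    ((hπ H).trans hqH) (hspec qB hcB)⟩

end LiftProjections

section PolynomialLift

open Polynomial

universe u

lemma not_isUnit_sub_of_isRoot_minpoly {𝕜 A : Type*} [Field 𝕜] [Ring A] [Algebra 𝕜 A] {x : A}
    (hx : IsIntegral 𝕜 x) {a : 𝕜} (ha : (minpoly 𝕜 x).IsRoot a) :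
    ¬ IsUnit (x - algebraMap 𝕜 A a) := by
  intro hunit
  obtain ⟨r, hr⟩ := dvd_iff_isRoot.2 ha
  have hr0 : r ≠ 0 := right_ne_zero_of_mul (hr ▸ minpoly.ne_zero hx)
  have hr_aeval : aeval x r = 0 := by
    rw [← hunit.mul_right_eq_zero, ← minpoly.aeval 𝕜 x, hr]
    simp
  have hdeg := natDegree_le_of_dvd (minpoly.dvd 𝕜 x hr_aeval) hr0
  rw [hr, natDegree_mul (X_sub_C_ne_zero a) hr0, natDegree_X_sub_C] at hdeg
  omega

lemma norm_le_of_isRoot_minpoly {A : Type*} [CStarAlgebra A] {x : A} (hx : IsIntegral ℂ x) {a : ℂ}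
    (ha : (minpoly ℂ x).IsRoot a) : ‖a‖ ≤ ‖x‖ := by
  have hmem : a ∈ spectrum ℂ x :=
    spectrum.mem_iff.2 (IsUnit.sub_iff.not.2 (not_isUnit_sub_of_isRoot_minpoly hx ha))
  exact (spectrum.norm_le_norm_mul_of_mem hmem).trans
    (mul_le_of_le_one_right (norm_nonneg x) norm_one_le_one)

lemma exists_injective_prod_eq_of_splits {K : Type*} [Field K] {p : K[X]} (hp : p.Splits)
    (hmonic : p.Monic) :
    ∃ (n : ℕ) (lam : Fin n → K) (k : Fin n → ℕ), Function.Injective lam ∧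
      (∀ i, p.IsRoot (lam i)) ∧ ∏ i, (X - C (lam i)) ^ (k i + 1) = p := by
  classical
  let e := p.roots.toFinset.equivFin
  have hroot (a : p.roots.toFinset) : p.IsRoot a :=
    isRoot_of_mem_roots (Multiset.mem_toFinset.1 a.2)
  refine ⟨_, fun i => e.symm i, fun i => p.rootMultiplicity (e.symm i : K) - 1,
    Subtype.val_injective.comp e.symm.injective, fun i => hroot _, ?_⟩
  calc ∏ i, (X - C (e.symm i : K)) ^ (p.rootMultiplicity (e.symm i : K) - 1 + 1)
      = ∏ i, (X - C (e.symm i : K)) ^ p.rootMultiplicity (e.symm i : K) := by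
        simp only [Nat.sub_add_cancel ((rootMultiplicity_pos hmonic.ne_zero).2 (hroot _))]
    _ = ∏ a : p.roots.toFinset, (X - C (a : K)) ^ p.rootMultiplicity (a : K) :=
        e.symm.prod_comp fun a => (X - C (a : K)) ^ p.rootMultiplicity (a : K)
    _ = (p.roots.map fun a => X - C a).prod := by
        rw [prod_multiset_root_eq_finset_root]
        exact Finset.prod_coe_sort _ fun a => (X - C a) ^ p.rootMultiplicity a
    _ = p := (hp.eq_prod_roots_of_monic hmonic).symm

theorem exists_forall_exists_map_eq_aeval_eq_zero {A C : Type u} [CStarAlgebra A] [CStarAlgebra C]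
    (q : A →⋆ₐ[ℂ] C) (hq : Function.Surjective q) {p : ℂ[X]} (hp : p ≠ 0) {x : C} (hx : ‖x‖ ≤ 1)
    (hpx : aeval x p = 0) :
    ∃ c, q c = 0 ∧ ∀ {B : Type u} [CStarAlgebra B] (qB : A →⋆ₐ[ℂ] B) (π : B →⋆ₐ[ℂ] C),
      (∀ a, π (qB a) = q a) → ‖qB c‖ < 1 → ∃ y, π y = x ∧ ‖y‖ ≤ 1 ∧ aeval y p = 0 := by
  have hint : IsIntegral ℂ x := isAlgebraic_iff_isIntegral.1 ⟨p, hp, hpx⟩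
  obtain ⟨n, lam, k, hlam, hroot, hprod⟩ :=
    exists_injective_prod_eq_of_splits (IsAlgClosed.splits (minpoly ℂ x)) (minpoly.monic hint)
  obtain ⟨P, hP, hsum, hnil⟩ := exists_isNilTriangular hlam (hprod ▸ minpoly.aeval ℂ x)
  obtain ⟨c, hc, hlift⟩ := exists_forall_exists_orthogonalProjections_map_eq q hq hP hsum
  refine ⟨c, hc, fun {B} _ qB π hπ hcB => ?_⟩
  obtain ⟨P', hP', hsum', hπP⟩ := hlift qB π hπ hcB
  have hπ_surj : Function.Surjective π := fun z =>
    let ⟨a, ha⟩ := hq z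
    ⟨qB a, (hπ a).trans ha⟩
  obtain ⟨y, hyx, hy, hy_nil⟩ := exists_map_eq_isNilTriangular_sub hπ_surj hP' hsum'
    (fun i => (norm_le_of_isRoot_minpoly hint (hroot i)).trans hx) hx
    (by simpa only [hπP] using hnil)
  refine ⟨y, hyx, hy, aeval_eq_zero_of_dvd_aeval_eq_zero (minpoly.dvd ℂ x hpx) ?_⟩
  exact hprod ▸ hy_nil.aeval_prod_eq_zero hP' hsum'

end PolynomialLift

section Chain

variable {A : Type*} [CStarAlgebra A]

instance (K : Ideal A) [K.IsTwoSided] : K.closure.IsTwoSided :=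
  ⟨fun b ha => map_mem_closure (f := (· * b)) (continuous_mul_const b) ha fun _ hz =>
    K.mul_mem_right b hz⟩

lemma exists_ideal_coe_eq_closure_iUnion {I : ℕ → TwoSidedIdeal A} (hI : Monotone I) :
    ∃ K : Ideal A, K.IsTwoSided ∧ (K : Set A) = closure (⋃ N, (I N : Set A)) := by
  let J : ℕ → Ideal A := fun N => (I N).asIdeal
  have hJ : ((⨆ N, J N : Ideal A) : Set A) = ⋃ N, (I N : Set A) :=
    Submodule.coe_iSup_of_directed _ (Monotone.directed_le fun M N h => hI h)
  have : (⨆ N, J N).IsTwoSided := ⟨fun b ha => by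
    rw [← SetLike.mem_coe, hJ, Set.mem_iUnion] at ha ⊢
    exact ha.imp fun N hN => (I N).mul_mem_right _ b hN⟩
  exact ⟨(⨆ N, J N).closure, inferInstance, congrArg closure hJ⟩

lemma quotientMap_aeval (K : Ideal A) [K.IsTwoSided] [IsClosed (K : Set A)] (p : Polynomial ℂ)
    (a : A) : quotientMap K (Polynomial.aeval a p) = Polynomial.aeval (quotientMap K a) p :=
  (Polynomial.aeval_algHom_apply (quotientMap K : A →ₐ[ℂ] A ⧸ K) a p).symm

end Chain

end PolynomialRelation

open PolynomialRelation in
theorem stmt_6_general {A : Type*} [CStarAlgebra A]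
    (I : ℕ → TwoSidedIdeal A) (hIclosed : ∀ N, IsClosed (I N : Set A))
    (hImono : ∀ M N, M ≤ N → (I M : Set A) ⊆ (I N : Set A))
    (p : Polynomial ℂ) (hp : p ≠ 0) (X : A)
    (hX0 : Polynomial.aeval X p ∈ closure (⋃ N, (I N : Set A)))
    (hX1 : Metric.infDist X (closure (⋃ N, (I N : Set A))) ≤ 1) :
    ∃ (N : ℕ) (Y : A), Y - X ∈ closure (⋃ N, (I N : Set A)) ∧
      Polynomial.aeval Y p ∈ (I N : Set A) ∧ Metric.infDist Y (I N : Set A) ≤ 1 := by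
  obtain ⟨K, _, hK⟩ := exists_ideal_coe_eq_closure_iUnion hImono
  have : IsClosed (K : Set A) := hK ▸ isClosed_closure
  have (N : ℕ) : IsClosed ((I N).asIdeal : Set A) := hIclosed N
  rw [← hK] at hX0 hX1 ⊢
  obtain ⟨c, hc, hlift⟩ := exists_forall_exists_map_eq_aeval_eq_zero (quotientMap K)
    (quotientMap_surjective K) hp ((norm_quotientMap K X).trans_le hX1)
    (by rw [← quotientMap_aeval]; exact (quotientMap_eq_zero_iff K).2 hX0)
  have hcK : c ∈ closure (⋃ N, (I N : Set A)) := hK ▸ (quotientMap_eq_zero_iff K).1 hc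
  obtain ⟨z, hz, hcz⟩ := Metric.mem_closure_iff.1 hcK 1 one_pos
  obtain ⟨N, hzN⟩ := Set.mem_iUnion.1 hz
  have hle : ∀ a ∈ (I N).asIdeal, quotientMap K a = 0 := fun a ha =>
    (quotientMap_eq_zero_iff K).2 <| hK.ge <| subset_closure <| Set.mem_iUnion_of_mem N ha
  obtain ⟨y, hyX, hy, hpy⟩ := hlift (quotientMap (I N).asIdeal)
    (quotientLift (I N).asIdeal (quotientMap K) hle) (fun _ => rfl) <|
      (norm_quotientMap _ c).trans_lt <| (Metric.infDist_le_dist_of_mem hzN).trans_lt hcz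
  obtain ⟨Y, rfl⟩ := quotientMap_surjective _ y
  refine ⟨N, Y, (quotientMap_eq_zero_iff K).1 ?_, (quotientMap_eq_zero_iff (I N).asIdeal).1 ?_,
    (norm_quotientMap (I N).asIdeal Y).symm.trans_le hy⟩
  · rw [map_sub, sub_eq_zero, ← hyX, quotientLift_quotientMap]
  · rw [quotientMap_aeval, hpy]

/-- Let `p(t) = (t−λ₁)^{k₁}⋯(t−λₙ)^{kₙ}` with distinct roots and all
`kᵢ ≥ 2`. The relation `p(x) = 0, ‖x‖ ≤ 1` is stable (its universal C*-algebra is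
semiprojective): for every C*-algebra `A` and increasing chain of closed two-sided ideals
`I₁ ⊆ I₂ ⊆ ⋯` with `I = closure (⋃ I_N)`, every element of `A/I` annihilated by `p` and
of norm `≤ 1` lifts, for some `N`, to an element of `A/I_N` annihilated by `p` and of
norm `≤ 1`. Here elements of the quotients are encoded by representatives: an `x ∈ A/I`
with `p(x) = 0` and `‖x‖ ≤ 1` is an `X : A` with `p(X) ∈ I` and `infDist X I ≤ 1` (the
quotient norm); `y ∈ A/I_N` mapping to `x` under the canonical surjection `A/I_N → A/I`
is a `Y : A` with `Y - X ∈ I`, and `p(y) = 0`, `‖y‖ ≤ 1` mean `p(Y) ∈ I_N`,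
`infDist Y I_N ≤ 1`. -/
theorem stmt_6 {A : Type*} [CStarAlgebra A]
    (I : ℕ → TwoSidedIdeal A) (hIclosed : ∀ N, IsClosed (I N : Set A))
    (hImono : ∀ M N, M ≤ N → (I M : Set A) ⊆ (I N : Set A))
    (n : ℕ) (lam : Fin n → ℂ) (hlam : Function.Injective lam)
    (k : Fin n → ℕ) (hk : ∀ i, 2 ≤ k i)
    (X : A)
    (hX0 : (List.ofFn fun i => (X - lam i • 1) ^ k i).prod ∈ closure (⋃ N, (I N : Set A)))
    (hX1 : Metric.infDist X (closure (⋃ N, (I N : Set A))) ≤ 1) :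
    ∃ (N : ℕ) (Y : A), Y - X ∈ closure (⋃ N, (I N : Set A)) ∧
      (List.ofFn fun i => (Y - lam i • 1) ^ k i).prod ∈ (I N : Set A) ∧
      Metric.infDist Y (I N : Set A) ≤ 1 := by
  open Polynomial in
  let p : ℂ[X] := ∏ i, (.X - C (lam i)) ^ k i
  have hp : p ≠ 0 := (monic_prod_of_monic _ _ fun i _ => (monic_X_sub_C (lam i)).pow (k i)).ne_zero
  have haeval (Z : A) : aeval Z p = (List.ofFn fun i => (Z - lam i • 1) ^ k i).prod := by
    simp [p, ← List.prod_ofFn, map_list_prod, List.map_ofFn, Function.comp_def,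
      Algebra.algebraMap_eq_smul_one]
  simp only [← haeval] at hX0 ⊢
  exact stmt_6_general I hIclosed hImono p hp X hX0 hX1
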